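/- arXiv:1409.3159 — 2 statements merged into one kernel-verified Lean document; each statement's English description precedes it below -/
import Mathlib

section
/- Let G be a connected graph and let k, λ, m be positive integers with m ≤ min{k, λ} + 1. If σ_m ≥ t_{k+1} − λ(k − m + 1), then t_k ≥ t_{k+1} − λ + 1. (Theorem 3) -/
open SimpleGraph

variable {V : Type*}

/-- A set of vertices is independent in `G`. -/
def IsIndSet (G : SimpleGraph V) (s : Set V) : Prop :=
  ∀ ⦃u⦄, u ∈ s → ∀ ⦃v⦄, v ∈ s → ¬ G.Adj u v

/-- The number of end-vertices (vertices of degree one) of a subgraph `H`. -/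
noncomputable def endVertexCount {G : SimpleGraph V} (H : G.Subgraph) : ℕ :=
  {v : V | v ∈ H.verts ∧ (H.neighborSet v).ncard = 1}.ncard

/-- `H` is a cycle; a single vertex and a single edge are regarded as
simple cycles of orders 1 and 2, respectively. -/
def IsCycleSubgraph {G : SimpleGraph V} (H : G.Subgraph) : Prop :=
  H.Connected ∧ (H.verts.ncard ≤ 2 ∨ ∀ v ∈ H.verts, (H.neighborSet v).ncard = 2)

/-- `H` is a `k`-ended tree in `G`: a tree with at most `k` end-vertices (leaves);
a cycle is regarded as a 1-ended tree. -/
def IsKEndedTree (G : SimpleGraph V) (k : ℕ) (H : G.Subgraph) : Prop :=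
  (H.coe.IsTree ∧ endVertexCount H ≤ k) ∨ (1 ≤ k ∧ IsCycleSubgraph H)

/-- `t k`: the order of a largest `k`-ended tree in `G`. -/
noncomputable def maxKEndedOrder (G : SimpleGraph V) (k : ℕ) : ℕ :=
  sSup {n | ∃ H : G.Subgraph, IsKEndedTree G k H ∧ H.verts.ncard = n}

/-- `σ m`: the minimum degree sum over independent sets of `m` vertices of `G`,
and `+∞` if the independence number of `G` is less than `m`. -/
noncomputable def minDegreeSum (G : SimpleGraph V) [Fintype V] [DecidableRel G.Adj]
    (m : ℕ) : ℕ∞ :=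
  ⨅ s ∈ {s : Finset V | s.card = m ∧ IsIndSet G ↑s}, (∑ v ∈ s, G.degree v : ℕ∞)

/-!
Suppose that `t_k + l ≤ t_{k+1}`, and let `T` be a largest `(k+1)`-ended tree, with vertex set `S`.
A tree in `G` with more than `t_k` vertices and at most `k + 1` end-vertices is rigid: it has
exactly `k + 1` end-vertices, and no two of them are adjacent in `G`. Since `T` has at least `l`
vertices to spare, the trees obtained from it by pruning fewer than `l` vertices at one end,
possibly after exchanging an edge, are rigid too. Hence the `l` vertices nearest to an end-vertex
`x`, and the `l` vertices following a `G`-neighbour `z` of `x` on the path of `T` from `z` to `x`,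
are adjacent in `G` to no end-vertex other than `x` and, apart from `x` itself, have degree two in
`T`.

Now fix a set `C` of `m` end-vertices. Charge `l` edges to each end-vertex outside `C`, the nearest
ones, and to each vertex `z` and each edge of `T` at `z` as many edges, running from `z` in that
direction, as `z` has `G`-neighbours in `C` on that side. The runs starting at different places do
not overlap, because their inner vertices have degree two and no `G`-neighbour in `C`. Hence
`l * (k + 1 - m)` plus the degree sum of `C` is at most the number `t_{k+1} - 1` of edges of `T`.
-/

/-- The degree of `v` in `T`, defined without finiteness or decidability instances; it is `0` when
`v` has infinitely many neighbours. -/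
noncomputable def deg (T : SimpleGraph V) (v : V) : ℕ := (T.neighborSet v).ncard

/-- The set of end-vertices of `T`. -/
def leaves (T : SimpleGraph V) : Set V := {v | deg T v = 1}

/-- The edges of `T` form a tree with vertex set `S`; vertices outside `S` are isolated in `T`. This
lets all the trees occurring in a proof live on the same vertex type. -/
structure IsTreeOn (T : SimpleGraph V) (S : Set V) : Prop where
  nonempty : S.Nonempty
  mem_of_adj : ∀ ⦃u v⦄, T.Adj u v → u ∈ S
  reachable : ∀ ⦃u⦄, u ∈ S → ∀ ⦃v⦄, v ∈ S → T.Reachable u v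
  isAcyclic : T.IsAcyclic

/-- The graph obtained from `T` by removing the edge `ab` and adding the edge `uv`. -/
def exchangeEdge (T : SimpleGraph V) (a b u v : V) : SimpleGraph V :=
  T.deleteEdges {s(a, b)} ⊔ edge u v

variable {G T T' : SimpleGraph V} {S : Set V} {a b u v w x y z : V} {k t l : ℕ}

section Degree

lemma mem_leaves_iff : x ∈ leaves T ↔ ∃ y, T.neighborSet x = {y} :=
  Set.ncard_eq_one

lemma eq_of_mem_leaves (hx : x ∈ leaves T) (hy : T.Adj x y) (hz : T.Adj x z) : y = z := by
  obtain ⟨c, hc⟩ := mem_leaves_iff.1 hx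
  have hyc : y ∈ T.neighborSet x := hy
  have hzc : z ∈ T.neighborSet x := hz
  rw [hc] at hyc hzc
  exact hyc.trans hzc.symm

lemma exists_adj_of_mem_leaves (hx : x ∈ leaves T) : ∃ y, T.Adj x y := by
  obtain ⟨y, hy⟩ := mem_leaves_iff.1 hx
  exact ⟨y, hy.ge rfl⟩

lemma deg_sup_edge [Finite V] [DecidableEq V] (huv : u ≠ v) (h : ¬ T.Adj u v) (w : V) :
    deg (T ⊔ edge u v) w = deg T w + (if w = u then 1 else 0) + (if w = v then 1 else 0) := by
  have insert_neighbor : ∀ {a b : V}, a ≠ b → ¬ T.Adj a b →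
      deg (T ⊔ edge a b) a = deg T a + 1 := by
    intro a b hab hT
    rw [deg, deg, ← Set.ncard_insert_of_notMem (s := T.neighborSet a) (a := b) hT]
    congr 1
    ext c
    simp only [mem_neighborSet, sup_adj, edge_adj, Set.mem_insert_iff]
    grind
  rcases eq_or_ne w u with rfl | hwu
  · rw [insert_neighbor huv h, if_pos rfl, if_neg huv]
  rcases eq_or_ne w v with rfl | hwv
  · rw [edge_comm, insert_neighbor huv.symm (fun h' => h h'.symm)]
    simp only [hwu, if_true, if_false, add_zero]
  · have same_neighbors : (T ⊔ edge u v).neighborSet w = T.neighborSet w := by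
      ext c
      simp only [mem_neighborSet, sup_adj, edge_adj]
      grind
    simp only [deg, same_neighbors, hwu, hwv, if_false, add_zero]

lemma deg_deleteEdges [Finite V] [DecidableEq V] (h : T.Adj a b) (w : V) :
    deg (T.deleteEdges {s(a, b)}) w + (if w = a then 1 else 0) + (if w = b then 1 else 0) =
      deg T w := by
  rw [← deg_sup_edge h.ne (by simp)]
  congr 1
  ext c d
  simp only [sup_adj, edge_adj, deleteEdges_adj, Set.mem_singleton_iff, Sym2.eq_iff]
  have := h.symm
  grind [h.ne]

lemma deg_exchangeEdge [Finite V] [DecidableEq V] (hab : T.Adj a b) (huv : u ≠ v) (h : ¬ T.Adj u v)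
    (w : V) :
    deg (exchangeEdge T a b u v) w + (if w = a then 1 else 0) + (if w = b then 1 else 0) =
      deg T w + (if w = u then 1 else 0) + (if w = v then 1 else 0) := by
  rw [exchangeEdge, deg_sup_edge huv fun h' => h (deleteEdges_le _ h'), ← deg_deleteEdges hab]
  omega

end Degree

section Surgery

lemma sup_edge_le (hT : T ≤ G) (huv : G.Adj u v) : T ⊔ edge u v ≤ G :=
  sup_le hT ((edge_le_iff G).2 (Or.inr huv))

lemma exchangeEdge_le (hT : T ≤ G) (huv : G.Adj u v) : exchangeEdge T a b u v ≤ G :=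
  sup_edge_le ((deleteEdges_le _).trans hT) huv

lemma reachable_of_forall_adj (h : ∀ ⦃u v⦄, T.Adj u v → T'.Reachable u v) (huv : T.Reachable u v) :
    T'.Reachable u v := by
  obtain ⟨p⟩ := huv
  induction p with
  | nil => rfl
  | cons huc _ ih => exact (h huc).trans ih

lemma eq_of_isPath (hT : T.IsAcyclic) {p q : T.Walk u v} (hp : p.IsPath) (hq : q.IsPath) : p = q :=
  congrArg Subtype.val ((hT.subsingleton_path u v).elim ⟨p, hp⟩ ⟨q, hq⟩)

lemma not_reachable_deleteEdges (hT : T.IsAcyclic) {p : T.Walk u v} (hp : p.IsPath)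
    (hab : s(a, b) ∈ p.edges) : ¬ (T.deleteEdges {s(a, b)}).Reachable u v := by
  intro hr
  obtain ⟨q, hq⟩ := hr.exists_isPath
  have hqp : q.mapLe (deleteEdges_le _) = p := eq_of_isPath hT (hq.mapLe (deleteEdges_le _)) hp
  rw [← hqp, Walk.edges_mapLe_eq_edges] at hab
  simpa using q.adj_of_mem_edges hab

/-- Adding `uv` closes a cycle through `ab`, so removing `ab` disconnects nothing. -/
lemma reachable_exchangeEdge {p : T.Walk u v} (hp : p.IsPath) (huv : u ≠ v) (h : ¬ T.Adj u v)
    (hab : s(a, b) ∈ p.edges) (hxy : T.Reachable x y) : (exchangeEdge T a b u v).Reachable x y := by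
  have hvu : (T ⊔ edge u v).Adj v u := by simp [edge_adj, huv.symm]
  have cycle : (Walk.cons hvu (p.mapLe le_sup_left)).IsCycle := by
    refine (Walk.cons_isCycle_iff _ _).2 ⟨hp.mapLe _, fun hmem => h ?_⟩
    rw [Walk.edges_mapLe_eq_edges] at hmem
    exact (p.adj_of_mem_edges hmem).symm
  have reachable_ab : (exchangeEdge T a b u v).Reachable a b := by
    refine Reachable.mono ?_ (adj_and_reachable_delete_edges_iff_exists_cycle.2
      ⟨v, _, cycle, by simp only [Walk.edges_cons, Walk.edges_mapLe_eq_edges, List.mem_cons, hab,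
        or_true]⟩).2
    rintro c d ⟨hcd, hne⟩
    simp only [exchangeEdge, sup_adj, deleteEdges_adj] at hcd ⊢
    grind [fromEdgeSet_adj, Adj.ne]
  refine reachable_of_forall_adj (fun c d hcd => ?_) hxy
  by_cases he : s(c, d) = s(a, b)
  · rcases Sym2.eq_iff.1 he with ⟨rfl, rfl⟩ | ⟨rfl, rfl⟩
    exacts [reachable_ab, reachable_ab.symm]
  · exact Adj.reachable (Or.inl ((deleteEdges_adj).2 ⟨hcd, he⟩))

lemma not_adj_of_isPath_append (hT : T.IsAcyclic) {p : T.Walk u v} {q : T.Walk v w}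
    (hpq : (p.append q).IsPath) (hp : 0 < p.length) (hvw : v ≠ w) : ¬ T.Adj u w := fun h => by
  have hlength := congrArg Walk.length (eq_of_isPath hT hpq (Walk.IsPath.of_adj h))
  rw [Walk.length_append, Adj.length_toWalk] at hlength
  exact hvw (Walk.eq_of_length_eq_zero (p := q) (by omega))

namespace IsTreeOn

lemma mem_of_mem_leaves (hT : IsTreeOn T S) (hx : x ∈ leaves T) : x ∈ S :=
  hT.mem_of_adj (exists_adj_of_mem_leaves hx).choose_spec

lemma exists_isPath (hT : IsTreeOn T S) (hu : u ∈ S) (hv : v ∈ S) :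
    ∃ p : T.Walk u v, p.IsPath :=
  (hT.reachable hu hv).exists_isPath

lemma deleteLeaf (hT : IsTreeOn T S) (hx : x ∈ leaves T) (hxy : T.Adj x y) :
    IsTreeOn (T.deleteEdges {s(x, y)}) (S \ {x}) := by
  have ne_of_adj : ∀ ⦃c d⦄, (T.deleteEdges {s(x, y)}).Adj c d → c ≠ x := by
    rintro c d h rfl
    rw [deleteEdges_adj] at h
    exact h.2 (by rw [eq_of_mem_leaves hx h.1 hxy]; rfl)
  refine ⟨⟨y, hT.mem_of_adj hxy.symm, hxy.ne'⟩,
    fun c d h => ⟨hT.mem_of_adj (deleteEdges_le _ h), ne_of_adj h⟩, ?_,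
    hT.isAcyclic.anti (deleteEdges_le _)⟩
  rintro u ⟨hu, hux⟩ v ⟨hv, hvx⟩
  obtain ⟨p, hp⟩ := hT.exists_isPath hu hv
  have hxp : x ∉ p.support := hp.not_mem_support_of_subsingleton_neighborSet (Ne.symm hux)
    (Ne.symm hvx) fun _ hc _ hd => eq_of_mem_leaves hx hc hd
  exact reachable_deleteEdges_iff_exists_walk.2
    ⟨p, fun h => hxp (p.fst_mem_support_of_mem_edges h)⟩

lemma sup_edge (hT : IsTreeOn T S) (hx : x ∈ S) (hz : z ∉ S) :
    IsTreeOn (T ⊔ edge x z) (insert z S) := by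
  have not_reachable : ¬ T.Reachable z x := by
    rintro ⟨p⟩
    cases p with
    | nil => exact hz hx
    | cons h _ => exact hz (hT.mem_of_adj h)
  have hxz : (T ⊔ edge x z).Adj x z := by
    simp [edge_adj, ne_of_mem_of_not_mem hx hz]
  have reachable_x : ∀ u ∈ insert z S, (T ⊔ edge x z).Reachable x u := by
    rintro u (rfl | hu)
    · exact hxz.reachable
    · exact (hT.reachable hx hu).mono le_sup_left
  refine ⟨⟨z, Set.mem_insert _ _⟩, ?_,
    fun u hu v hv => (reachable_x u hu).symm.trans (reachable_x v hv),
    hT.isAcyclic.sup_edge_of_not_reachable fun h => not_reachable h.symm⟩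
  intro u v h
  rcases h with h | h
  · exact Set.mem_insert_of_mem _ (hT.mem_of_adj h)
  · rcases (edge_adj x z u v).1 h with ⟨⟨rfl, -⟩ | ⟨rfl, -⟩, -⟩
    · exact Set.mem_insert_of_mem _ hx
    · exact Set.mem_insert _ _

lemma exchange (hT : IsTreeOn T S) {p : T.Walk u v} (hp : p.IsPath) (huv : u ≠ v)
    (h : ¬ T.Adj u v) (hab : s(a, b) ∈ p.edges) : IsTreeOn (exchangeEdge T a b u v) S := by
  refine ⟨hT.nonempty, ?_,
    fun c hc d hd => reachable_exchangeEdge hp huv h hab (hT.reachable hc hd),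
    (hT.isAcyclic.anti (deleteEdges_le _)).sup_edge_of_not_reachable
      (not_reachable_deleteEdges hT.isAcyclic hp hab)⟩
  intro c d hcd
  rcases hcd with hcd | hcd
  · exact hT.mem_of_adj (deleteEdges_le _ hcd)
  · have hnil : ¬ p.Nil := fun hn => huv hn.eq
    rcases (edge_adj u v c d).1 hcd with ⟨⟨rfl, -⟩ | ⟨rfl, -⟩, -⟩
    · exact hT.mem_of_adj (p.adj_snd hnil)
    · exact hT.mem_of_adj (p.adj_penultimate hnil).symm

end IsTreeOn

end Surgery

section Order

lemma IsKEndedTree.ncard_le_maxKEndedOrder [Finite V] {H : G.Subgraph} (hH : IsKEndedTree G k H) :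
    H.verts.ncard ≤ maxKEndedOrder G k := by
  refine le_csSup ⟨Nat.card V, ?_⟩ ⟨H, hH, rfl⟩
  rintro _ ⟨K, -, rfl⟩
  exact Set.ncard_le_card _

lemma ncard_support_le_maxKEndedOrder [Finite V] (hk : 1 ≤ k) {c : G.Walk u u} (hc : c.IsCycle) :
    {w | w ∈ c.support}.ncard ≤ maxKEndedOrder G k := by
  rw [← c.verts_toSubgraph]
  exact IsKEndedTree.ncard_le_maxKEndedOrder (Or.inr ⟨hk, c.toSubgraph_connected,
    Or.inr fun v hv => hc.ncard_neighborSet_toSubgraph_eq_two (c.mem_verts_toSubgraph.1 hv)⟩)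

lemma ncard_pair_le_maxKEndedOrder [Finite V] (hk : 1 ≤ k) (huv : G.Adj u v) :
    ({u, v} : Set V).ncard ≤ maxKEndedOrder G k :=
  IsKEndedTree.ncard_le_maxKEndedOrder (H := G.subgraphOfAdj huv)
    (Or.inr ⟨hk, Subgraph.subgraphOfAdj_connected huv, Or.inl (Set.ncard_pair huv.ne).le⟩)

namespace IsTreeOn

lemma isTree_induce (hT : IsTreeOn T S) : (T.induce S).IsTree := by
  have mem_of_walk : ∀ {u v} (p : T.Walk u v), u ∈ S → ∀ w ∈ p.support, w ∈ S := by
    intro u v p hu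
    induction p with
    | nil => simpa using hu
    | cons h p ih => simpa [hu] using ih (hT.mem_of_adj h.symm)
  have := hT.nonempty.to_subtype
  refine ⟨⟨?_⟩, hT.isAcyclic.induce S⟩
  rintro ⟨u, hu⟩ ⟨v, hv⟩
  obtain ⟨p⟩ := hT.reachable hu hv
  exact ⟨p.induce S (mem_of_walk p hu)⟩

lemma ncard_edgeSet [Finite V] (hT : IsTreeOn T S) : T.edgeSet.ncard + 1 = S.ncard := by
  have edgeSet_eq : T.edgeSet = Sym2.map Subtype.val '' (T.induce S).edgeSet := by
    ext e
    constructor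
    · induction e with | h u v =>
      intro h
      exact ⟨s(⟨u, hT.mem_of_adj h⟩, ⟨v, hT.mem_of_adj (Adj.symm h)⟩), h, rfl⟩
    · rintro ⟨e, he, rfl⟩
      induction e with | h u v => exact he
  rw [edgeSet_eq, Set.ncard_image_of_injective _ (Sym2.map.injective Subtype.val_injective)]
  exact (isTree_iff_connected_and_card.1 hT.isTree_induce).2

lemma ncard_le_maxKEndedOrder [Finite V] (hT : IsTreeOn T S) (hTG : T ≤ G)
    (hk : (leaves T).ncard ≤ k) : S.ncard ≤ maxKEndedOrder G k := by
  have adj_iff : ∀ {u v}, ((toSubgraph T hTG).induce S).Adj u v ↔ T.Adj u v := by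
    intro u v
    exact ⟨fun h => h.2.2, fun h => ⟨hT.mem_of_adj h, hT.mem_of_adj h.symm, h⟩⟩
  refine IsKEndedTree.ncard_le_maxKEndedOrder (H := (toSubgraph T hTG).induce S) (Or.inl ⟨?_, ?_⟩)
  · have coe_eq : ((toSubgraph T hTG).induce S).coe = T.induce S := by
      ext u v
      exact adj_iff
    exact coe_eq ▸ hT.isTree_induce
  · refine (Set.ncard_le_ncard (fun v hv => ?_) (Set.toFinite _)).trans hk
    have neighborSet_eq : ((toSubgraph T hTG).induce S).neighborSet v = T.neighborSet v :=
      Set.ext fun w => adj_iff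
    exact (congrArg Set.ncard neighborSet_eq).symm.trans hv.2

lemma spanningCoe {H : G.Subgraph} (hH : H.coe.IsTree) : IsTreeOn H.spanningCoe H.verts := by
  refine ⟨Set.nonempty_coe_sort.1 hH.connected.nonempty, fun u v h => H.edge_vert h, ?_, ?_⟩
  · intro u hu v hv
    exact (hH.connected.preconnected ⟨u, hu⟩ ⟨v, hv⟩).map
      (⟨Subtype.val, fun h => h⟩ : H.coe →g H.spanningCoe)
  · intro v w hw
    have support_subset : ∀ x ∈ w.support, x ∈ H.verts := by
      intro x hx
      obtain ⟨e, he, hxe⟩ := (Walk.mem_support_iff_exists_mem_edges_of_not_nil hw.not_nil).1 hx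
      exact H.mem_verts_of_mem_edge (by simpa using w.edges_subset_edgeSet he) hxe
    have acyclic : (H.spanningCoe.induce H.verts).IsAcyclic :=
      hH.isAcyclic.comap ⟨id, fun h => h⟩ Function.injective_id
    refine acyclic (w.induce H.verts support_subset)
      (Walk.IsCycle.of_map (f := (Embedding.induce _).toHom) ?_)
    rwa [Walk.map_induce]

end IsTreeOn

lemma exists_isTreeOn_ncard_eq [Finite V] (hk : 1 ≤ k)
    (hlt : maxKEndedOrder G k < maxKEndedOrder G (k + 1)) :
    ∃ T S, IsTreeOn T S ∧ T ≤ G ∧ S.ncard = maxKEndedOrder G (k + 1) ∧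
      (leaves T).ncard ≤ k + 1 := by
  have orders_nonempty :
      {n | ∃ H : G.Subgraph, IsKEndedTree G (k + 1) H ∧ H.verts.ncard = n}.Nonempty := by
    by_contra hempty
    rw [Set.not_nonempty_iff_eq_empty] at hempty
    simp [maxKEndedOrder, hempty] at hlt
  obtain ⟨H, hH, hcard⟩ := Nat.sSup_mem orders_nonempty
    ⟨Nat.card V, by rintro _ ⟨K, -, rfl⟩; exact Set.ncard_le_card _⟩
  rcases hH with ⟨hH, hleaves⟩ | ⟨-, hH⟩
  · have hT := IsTreeOn.spanningCoe hH
    refine ⟨H.spanningCoe, H.verts, hT, H.spanningCoe_le, hcard, ?_⟩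
    refine (Set.ncard_le_ncard (fun v hv => ?_) (Set.toFinite _)).trans hleaves
    exact ⟨hT.mem_of_mem_leaves hv, hv⟩
  · have := IsKEndedTree.ncard_le_maxKEndedOrder (k := k) (Or.inr ⟨hk, hH⟩)
    exact absurd (hcard.symm.trans_le this) hlt.not_ge

end Order

section RigidTrees

namespace IsTreeOn

lemma ncard_lt_maxKEndedOrder [Finite V] (hT : IsTreeOn T S) (hTG : T ≤ G)
    (hk : (leaves T).ncard ≤ k) (hx : x ∈ leaves T) (hxz : G.Adj x z) (hz : z ∉ S) :
    S.ncard < maxKEndedOrder G k := by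
  classical
  have hTxz : ¬ T.Adj x z := fun h => hz (hT.mem_of_adj h.symm)
  have leaves_subset : leaves (T ⊔ edge x z) ⊆ insert z (leaves T \ {x}) := by
    intro v hv
    have hdeg := deg_sup_edge hxz.ne hTxz v
    have hx' : deg T x = 1 := hx
    have hv' : deg (T ⊔ edge x z) v = 1 := hv
    simp only [Set.mem_insert_iff, Set.mem_sdiff, Set.mem_singleton_iff, leaves, Set.mem_ofPred_eq]
    grind
  have ncard_leaves : (leaves (T ⊔ edge x z)).ncard ≤ k := by
    have := Set.ncard_le_ncard leaves_subset (Set.toFinite _)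
    have := Set.ncard_insert_le z (leaves T \ {x})
    have := Set.ncard_sdiff_singleton_add_one hx (Set.toFinite _)
    omega
  have := (hT.sup_edge (hT.mem_of_mem_leaves hx) hz).ncard_le_maxKEndedOrder
    (sup_edge_le hTG hxz) ncard_leaves
  rwa [Set.ncard_insert_of_notMem hz (Set.toFinite _)] at this

lemma exists_branch_vertex [Finite V] (hT : IsTreeOn T S) (hu : u ∈ leaves T) (hv : v ∈ leaves T)
    (huv : u ≠ v) {p : T.Walk u v} (hp : p.IsPath) (hw : w ∈ S) (hwp : w ∉ p.support) :
    ∃ b ∈ p.support, 3 ≤ deg T b := by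
  have hnil : ¬ p.Nil := fun h => huv h.eq
  obtain ⟨q⟩ := hT.reachable (hT.mem_of_mem_leaves hu) hw
  obtain ⟨d, -, hfst, hsnd⟩ := q.exists_boundary_dart {c | c ∈ p.support} p.start_mem_support hwp
  have hdu : d.fst ≠ u := by
    rintro rfl
    exact hsnd (eq_of_mem_leaves hu d.adj (p.adj_snd hnil) ▸ p.getVert_mem_support 1)
  have hdv : d.fst ≠ v := by
    rintro rfl
    exact hsnd (eq_of_mem_leaves hv d.adj (p.adj_penultimate hnil).symm ▸ p.getVert_mem_support _)
  obtain ⟨i, hi, hil⟩ := Walk.mem_support_iff_exists_getVert.1 hfst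
  have hi0 : i ≠ 0 := by
    rintro rfl
    exact hdu (by rw [← hi, p.getVert_zero])
  have hilt : i < p.length := lt_of_le_of_ne hil fun h => hdv (by rw [← hi, h, p.getVert_length])
  have hcard := hp.ncard_neighborSet_toSubgraph_internal_eq_two hi0 hilt
  rw [hi] at hcard
  have hsnd' : d.snd ∉ p.toSubgraph.neighborSet d.fst := fun h =>
    hsnd (p.mem_verts_toSubgraph.1 (p.toSubgraph.edge_vert h.symm))
  refine ⟨d.fst, hfst, ?_⟩
  calc 3 = (insert d.snd (p.toSubgraph.neighborSet d.fst)).ncard := by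
        rw [Set.ncard_insert_of_notMem hsnd' (Set.toFinite _), hcard]
    _ ≤ deg T d.fst := Set.ncard_le_ncard
        (Set.insert_subset d.adj (p.toSubgraph.neighborSet_subset _)) (Set.toFinite _)

/-- Open the cycle closed by `uv` at an edge `ab` of the path: this creates at most the new leaf `a`
and removes the leaves `u` and `v`. -/
lemma ncard_le_of_branch_vertex [Finite V] (hT : IsTreeOn T S) (hTG : T ≤ G)
    (hleaves : (leaves T).ncard ≤ k + 1) (hu : u ∈ leaves T) (hv : v ∈ leaves T) (huv : G.Adj u v)
    (hTuv : ¬ T.Adj u v) {p : T.Walk u v} (hp : p.IsPath) (hb : b ∈ p.support)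
    (hdeg_b : 3 ≤ deg T b) : S.ncard ≤ maxKEndedOrder G k := by
  classical
  obtain ⟨a, hab⟩ : ∃ a, s(a, b) ∈ p.edges := by
    obtain ⟨e, he, hbe⟩ := (Walk.mem_support_iff_exists_mem_edges_of_not_nil
      fun h => huv.ne h.eq).1 hb
    obtain ⟨a, rfl⟩ := Sym2.mem_iff_exists.1 hbe
    exact ⟨a, Sym2.eq_swap ▸ he⟩
  have leaves_subset : leaves (exchangeEdge T a b u v) ⊆ insert a ((leaves T \ {u}) \ {v}) := by
    intro c hc
    have hdeg := deg_exchangeEdge (p.adj_of_mem_edges hab) huv.ne hTuv c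
    have hu' : deg T u = 1 := hu
    have hv' : deg T v = 1 := hv
    have hc' : deg (exchangeEdge T a b u v) c = 1 := hc
    simp only [Set.mem_insert_iff, Set.mem_sdiff, Set.mem_singleton_iff, leaves, Set.mem_ofPred_eq]
    grind
  refine (hT.exchange hp huv.ne hTuv hab).ncard_le_maxKEndedOrder (exchangeEdge_le hTG huv) ?_
  have := Set.ncard_le_ncard leaves_subset (Set.toFinite _)
  have := Set.ncard_insert_le a ((leaves T \ {u}) \ {v})
  have := Set.ncard_sdiff_singleton_add_one hu (Set.toFinite _)
  have := Set.ncard_sdiff_singleton_add_one (show v ∈ leaves T \ {u} from ⟨hv, huv.ne'⟩)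
    (Set.toFinite _)
  omega

lemma ncard_le_of_adj_leaves [Finite V] (hT : IsTreeOn T S) (hTG : T ≤ G) (hk : 1 ≤ k)
    (hleaves : (leaves T).ncard ≤ k + 1) (hu : u ∈ leaves T) (hv : v ∈ leaves T)
    (huv : G.Adj u v) : S.ncard ≤ maxKEndedOrder G k := by
  classical
  by_cases hTuv : T.Adj u v
  · refine (Set.ncard_le_ncard (fun w hw => ?_)).trans (ncard_pair_le_maxKEndedOrder hk huv)
    by_contra hwuv
    obtain ⟨b, hb, hdeg⟩ := hT.exists_branch_vertex hu hv huv.ne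
      (p := hTuv.toWalk) (by simp [huv.ne]) hw (by simpa using hwuv)
    have hb : b ∈ leaves T := by
      rcases (by simpa using hb : b = u ∨ b = v) with rfl | rfl
      exacts [hu, hv]
    exact absurd (hdeg.trans_eq hb) (by decide)
  obtain ⟨p, hp⟩ := hT.exists_isPath (hT.mem_of_mem_leaves hu) (hT.mem_of_mem_leaves hv)
  by_cases hspan : ∀ w ∈ S, w ∈ p.support
  · have cycle : (Walk.cons huv.symm (p.mapLe hTG)).IsCycle := by
      refine (Walk.cons_isCycle_iff _ _).2 ⟨hp.mapLe _, fun hmem => hTuv ?_⟩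
      rw [Walk.edges_mapLe_eq_edges] at hmem
      exact (p.adj_of_mem_edges hmem).symm
    refine (Set.ncard_le_ncard (fun w hw => ?_)).trans (ncard_support_le_maxKEndedOrder hk cycle)
    simp [hspan w hw]
  push Not at hspan
  obtain ⟨w, hw, hwp⟩ := hspan
  obtain ⟨b, hb, hdeg⟩ := hT.exists_branch_vertex hu hv huv.ne hp hw hwp
  exact hT.ncard_le_of_branch_vertex hTG hleaves hu hv huv hTuv hp hb hdeg

end IsTreeOn

/-- Every tree in `G` with more than `t` vertices and at most `k + 1` end-vertices has exactly
`k + 1` end-vertices, and they are independent in `G`. This is how the maximality of `t_k` enters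
the proof, with `t = t_k`. -/
def RigidAbove (G : SimpleGraph V) (k t : ℕ) : Prop :=
  ∀ ⦃T : SimpleGraph V⦄ ⦃S : Set V⦄, IsTreeOn T S → T ≤ G → t < S.ncard →
    (leaves T).ncard ≤ k + 1 → (leaves T).ncard = k + 1 ∧ IsIndSet G (leaves T)

/-- The vertex `v` belongs to the end-vertex `x` of `T`: unless it is `x` itself, it has degree two
in `T`, and it is adjacent in `G` to no end-vertex of `T` other than `x`. -/
def IsPrivate (G T : SimpleGraph V) (x v : V) : Prop :=
  (v ≠ x → deg T v = 2) ∧ ∀ y ∈ leaves T, y ≠ x → ¬ G.Adj v y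

/-- The vertices at distance less than `l` from an end-vertex `x` of `T` are private to `x`, and so
are the vertices of the first `l` edges of the path leading in `T` from a `G`-neighbour `z` of `x`
to `x`, except `z` itself. -/
structure HasPrivateThreads (G T : SimpleGraph V) (l : ℕ) : Prop where
  isIndSet : IsIndSet G (leaves T)
  of_leaf : ∀ ⦃x v : V⦄, x ∈ leaves T → ∀ p : T.Walk x v, p.IsPath → p.length < l →
    IsPrivate G T x v
  of_neighbor : ∀ ⦃x z v : V⦄, x ∈ leaves T → G.Adj x z → ∀ (p : T.Walk z v) (q : T.Walk v x),
    (p.append q).IsPath → 0 < p.length → p.length ≤ l → IsPrivate G T x v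

lemma rigidAbove_maxKEndedOrder [Finite V] (G : SimpleGraph V) (hk : 1 ≤ k) :
    RigidAbove G k (maxKEndedOrder G k) := by
  intro T S hT hTG hS hleaves
  refine ⟨hleaves.antisymm ?_, fun u hu v hv huv => ?_⟩
  · by_contra! h
    exact hS.not_ge (hT.ncard_le_maxKEndedOrder hTG (Nat.lt_succ_iff.1 h))
  · exact hS.not_ge (hT.ncard_le_of_adj_leaves hTG hk hleaves hu hv huv)

lemma leaves_subset_insert_sdiff [DecidableEq V] (hxT' : x ∉ leaves T')
    (hdeg : ∀ v ≠ x, deg T' v + (if v = w then 1 else 0) = deg T v) :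
    leaves T' ⊆ insert w (leaves T \ {x}) := by
  intro c hc
  have hcx : c ≠ x := ne_of_mem_of_not_mem hc hxT'
  rcases eq_or_ne c w with rfl | hcw
  · exact Set.mem_insert _ _
  · have hc' := hdeg c hcx
    rw [if_neg hcw, add_zero] at hc'
    exact Set.mem_insert_of_mem _ ⟨hc'.symm.trans hc, hcx⟩

namespace RigidAbove

/-- If a surgery trades the end-vertex `x` for `w`, rigidity makes `w` an end-vertex of the new tree
and its private vertices are those of `x`. -/
lemma isPrivate_of_shift [Finite V] [DecidableEq V] (hrigid : RigidAbove G k t)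
    (hleaves : (leaves T).ncard ≤ k + 1) (hx : x ∈ leaves T) (hT' : IsTreeOn T' S) (hT'G : T' ≤ G)
    (hS : t < S.ncard) (hxT' : x ∉ leaves T')
    (hdeg : ∀ v ≠ x, deg T' v + (if v = w then 1 else 0) = deg T v) :
    (leaves T').ncard ≤ k + 1 ∧ w ∈ leaves T' ∧
      ∀ v ≠ x, IsPrivate G T' w v → IsPrivate G T x v := by
  have leaves_subset := leaves_subset_insert_sdiff hxT' hdeg
  have hcard := Set.ncard_sdiff_singleton_add_one hx (Set.toFinite _)
  have hleaves' : (leaves T').ncard ≤ k + 1 := by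
    have := Set.ncard_le_ncard leaves_subset (Set.toFinite _)
    have := Set.ncard_insert_le w (leaves T \ {x})
    omega
  have hw : w ∈ leaves T' := by
    by_contra hw
    have := Set.ncard_le_ncard ((Set.subset_insert_iff_of_notMem hw).1 leaves_subset)
      (Set.toFinite _)
    have := (hrigid hT' hT'G hS hleaves').1
    omega
  have hdeg_w : deg T w = 2 := by
    rw [← hdeg w (ne_of_mem_of_not_mem hw hxT'), if_pos rfl, show deg T' w = 1 from hw]
  refine ⟨hleaves', hw, fun v hvx hv => ⟨fun _ => ?_, fun y hy hyx => hv.2 y ?_ ?_⟩⟩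
  · rcases eq_or_ne v w with rfl | hvw
    · exact hdeg_w
    · rw [← hdeg v hvx, if_neg hvw, hv.1 hvw]
  all_goals
    have hyw : y ≠ w := by
      rintro rfl
      exact absurd (hdeg_w.symm.trans hy) (by decide)
  · have hy' := hdeg y hyx
    rw [if_neg hyw, add_zero] at hy'
    exact hy'.trans hy
  · exact hyw

lemma isPrivate_self (hrigid : RigidAbove G k t) (hT : IsTreeOn T S) (hTG : T ≤ G)
    (hleaves : (leaves T).ncard ≤ k + 1) (hx : x ∈ leaves T) (hS : t < S.ncard) :
    IsPrivate G T x x :=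
  ⟨fun h => absurd rfl h, fun _ hy _ => (hrigid hT hTG hS hleaves).2 hx hy⟩

/-- Remove `x`: the tree still has more than `t` vertices, so its neighbour becomes an end-vertex,
now one step closer to `v`. -/
lemma isPrivate_of_leaf [Finite V] (hrigid : RigidAbove G k t) (hT : IsTreeOn T S) (hTG : T ≤ G)
    (hleaves : (leaves T).ncard ≤ k + 1) (hx : x ∈ leaves T) {p : T.Walk x v} (hp : p.IsPath)
    (hlen : t + p.length < S.ncard) : IsPrivate G T x v := by
  classical
  induction hn : p.length generalizing T S x with
  | zero =>
    obtain rfl := Walk.eq_of_length_eq_zero hn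
    exact hrigid.isPrivate_self hT hTG hleaves hx (by omega)
  | succ n ih =>
    cases p with
    | nil => simp at hn
    | @cons _ y _ hxy q =>
      rw [Walk.length_cons] at hn hlen
      have hdeg := deg_deleteEdges hxy
      have hxT' : x ∉ leaves (T.deleteEdges {s(x, y)}) := fun h => by
        have := hdeg x
        rw [show deg T x = 1 from hx, show deg (T.deleteEdges {s(x, y)}) x = 1 from h] at this
        simp [hxy.ne] at this
      have hcard := Set.ncard_sdiff_singleton_add_one (hT.mem_of_mem_leaves hx) (Set.toFinite S)
      obtain ⟨hq, hxq⟩ := (Walk.cons_isPath_iff _ _).1 hp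
      have hvx : v ≠ x := by
        rintro rfl
        exact hxq q.end_mem_support
      have hedge : s(x, y) ∉ q.edges := fun h => hxq (q.fst_mem_support_of_mem_edges h)
      obtain ⟨hleaves', hy, shift⟩ := hrigid.isPrivate_of_shift (w := y) hleaves hx
        (hT.deleteLeaf hx hxy) ((deleteEdges_le _).trans hTG) (by omega) hxT'
        fun c hc => by simpa [hc] using hdeg c
      refine shift v hvx (ih (hT.deleteLeaf hx hxy) ((deleteEdges_le _).trans hTG) hleaves' hy
        (p := q.toDeleteEdge _ hedge) (hq.transfer _) ?_ ?_)
      all_goals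
        rw [Walk.length_transfer]
        omega

/-- Exchange the first edge `zw` of the path from `z` to `x` for `zx`: the new end-vertex `w` plays
the role of `x`, so the bound for the vertices close to an end-vertex applies to it. -/
lemma isPrivate_of_neighbor [Finite V] (hrigid : RigidAbove G k t) (hT : IsTreeOn T S) (hTG : T ≤ G)
    (hleaves : (leaves T).ncard ≤ k + 1) (hx : x ∈ leaves T) (hxz : G.Adj x z)
    {p : T.Walk z v} {q : T.Walk v x} (hpq : (p.append q).IsPath) (hpos : 0 < p.length)
    (hlen : t + p.length ≤ S.ncard) : IsPrivate G T x v := by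
  classical
  rcases eq_or_ne v x with rfl | hvx
  · exact hrigid.isPrivate_self hT hTG hleaves hx (by omega)
  have hzx := not_adj_of_isPath_append hT.isAcyclic hpq hpos hvx
  cases p with
  | nil => simp at hpos
  | @cons _ w _ hzw p =>
    obtain ⟨hp, hzp⟩ := (Walk.cons_isPath_iff _ _).1 hpq.of_append_left
    have hedges : ∀ e ∈ p.edges, e ∈ (exchangeEdge T z w z x).edgeSet := fun e he => by
      rw [exchangeEdge, edgeSet_sup, edgeSet_deleteEdges]
      refine Or.inl ⟨p.edges_subset_edgeSet he, ?_⟩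
      rintro rfl
      exact hzp (p.fst_mem_support_of_mem_edges he)
    have hT' := hT.exchange (a := z) (b := w) hpq hxz.ne' hzx (by simp)
    have hdeg := deg_exchangeEdge hzw hxz.ne' hzx
    have hwx : w ≠ x := by
      rintro rfl
      exact hzx hzw
    have hxT' : x ∉ leaves (exchangeEdge T z w z x) := fun h => by
      have := hdeg x
      rw [show deg T x = 1 from hx, show deg (exchangeEdge T z w z x) x = 1 from h] at this
      simp [hwx.symm] at this
    rw [Walk.length_cons] at hlen
    obtain ⟨hleaves', hw, shift⟩ := hrigid.isPrivate_of_shift (w := w) hleaves hx hT'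
      (exchangeEdge_le hTG hxz.symm) (by omega) hxT' fun c hc => by
        have := hdeg c
        rw [if_neg hc] at this
        omega
    refine shift v hvx (hrigid.isPrivate_of_leaf hT' (exchangeEdge_le hTG hxz.symm) hleaves' hw
      (p := p.transfer _ hedges) (hp.transfer _) ?_)
    rw [Walk.length_transfer]
    omega

lemma hasPrivateThreads [Finite V] (hrigid : RigidAbove G k t) (hT : IsTreeOn T S) (hTG : T ≤ G)
    (hleaves : (leaves T).ncard ≤ k + 1) (hl : 1 ≤ l) (hS : t + l ≤ S.ncard) :
    HasPrivateThreads G T l where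
  isIndSet := (hrigid hT hTG (by omega) hleaves).2
  of_leaf _ _ hx _ hp hlen := hrigid.isPrivate_of_leaf hT hTG hleaves hx hp (by omega)
  of_neighbor _ _ _ hx hxz _ _ hpq hpos hlen :=
    hrigid.isPrivate_of_neighbor hT hTG hleaves hx hxz hpq hpos (by omega)

end RigidAbove

end RigidTrees

section Flow

open Classical in
/-- The neighbour of `b` opposite to its neighbour `a`: the other neighbour if `b` has degree two,
and `a` itself otherwise. This choice makes `across T b` an involution of the neighbours of `b`. -/
noncomputable def across (T : SimpleGraph V) (b a : V) : V :=
  if h : ∃ c, c ≠ a ∧ T.neighborSet b = {a, c} then h.choose else a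

lemma neighborSet_eq_pair_across (hdeg : deg T b = 2) (hab : T.Adj b a) :
    across T b a ≠ a ∧ T.neighborSet b = {a, across T b a} := by
  obtain ⟨c, d, hcd, hpair⟩ := Set.ncard_eq_two.1 hdeg
  have h : ∃ c, c ≠ a ∧ T.neighborSet b = {a, c} := by
    have ha : a ∈ T.neighborSet b := hab
    rw [hpair] at ha
    rcases ha with rfl | rfl
    exacts [⟨d, hcd.symm, hpair⟩, ⟨c, hcd, hpair.trans (Set.pair_comm _ _)⟩]
  rw [across, dif_pos h]
  exact h.choose_spec

lemma across_eq_self (hdeg : deg T b ≠ 2) : across T b a = a :=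
  dif_neg fun ⟨_, hne, h⟩ => hdeg (by rw [deg, h, Set.ncard_pair hne.symm])

lemma adj_across (hab : T.Adj b a) : T.Adj b (across T b a) := by
  by_cases hdeg : deg T b = 2
  · have : across T b a ∈ T.neighborSet b := by
      rw [(neighborSet_eq_pair_across hdeg hab).2]
      exact Or.inr rfl
    exact this
  · rwa [across_eq_self hdeg]

lemma across_eq (hdeg : deg T b = 2) (ha : T.Adj b a) {c : V} (hc : T.Adj b c) (hca : c ≠ a) :
    across T b a = c := by
  have hc' : c ∈ T.neighborSet b := hc
  rw [(neighborSet_eq_pair_across hdeg ha).2] at hc'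
  exact (hc'.resolve_left hca).symm

lemma across_across (hab : T.Adj b a) : across T b (across T b a) = a := by
  by_cases hdeg : deg T b = 2
  · exact across_eq hdeg (adj_across hab) hab (neighborSet_eq_pair_across hdeg hab).1.symm
  · rw [across_eq_self hdeg, across_eq_self hdeg]

/-- The motion along the darts of `T` that runs straight through the vertices of degree two and is
reflected at all others. -/
noncomputable def flow (e : T.Dart) : T.Dart :=
  ⟨(e.snd, across T e.snd e.fst), adj_across e.adj.symm⟩

lemma flow_symm_flow (e : T.Dart) : flow (flow e).symm = e.symm :=
  Dart.ext _ _ (Prod.ext rfl (across_across e.adj.symm))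

lemma flow_injective : Function.Injective (flow (T := T)) := fun e e' h =>
  Dart.symm_involutive.injective (by rw [← flow_symm_flow, h, flow_symm_flow])

lemma iterate_flow_symm (n : ℕ) (e : T.Dart) : flow^[n] (flow^[n] e).symm = e.symm := by
  induction n with
  | zero => rfl
  | succ n ih => rw [Function.iterate_succ_apply' flow n e, Function.iterate_succ_apply,
      flow_symm_flow, ih]

lemma fst_iterate_flow_succ (n : ℕ) (e : T.Dart) : (flow^[n + 1] e).fst = (flow^[n] e).snd := by
  rw [Function.iterate_succ_apply']
  rfl

/-- The dart `e` starts a path in `T` ending at `x`. -/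
def LeadsTo (e : T.Dart) (x : V) : Prop :=
  ∃ q : T.Walk e.snd x, (Walk.cons e.adj q).IsPath

/-- The first `d` steps of the flow from the dart `e` are not reflected. -/
def IsThread (e : T.Dart) (d : ℕ) : Prop :=
  ∀ j < d, deg T (flow^[j] e).snd = 2

namespace LeadsTo

variable {e : T.Dart}

lemma not_symm (hT : T.IsAcyclic) (h : LeadsTo e x) : ¬ LeadsTo e.symm x := by
  rintro ⟨q', hq'⟩
  obtain ⟨q, hq⟩ := h
  have heq : q = Walk.cons e.symm.adj q' := eq_of_isPath hT hq.of_cons hq'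
  refine ((Walk.cons_isPath_iff _ _).1 hq).2 ?_
  rw [heq]
  exact List.mem_cons_of_mem _ q'.start_mem_support

lemma exists_dart (hzx : z ≠ x) (h : T.Reachable z x) : ∃ e : T.Dart, e.fst = z ∧ LeadsTo e x := by
  obtain ⟨p, hp⟩ := h.exists_isPath
  cases p with
  | nil => exact absurd rfl hzx
  | @cons _ c _ h q => exact ⟨⟨(z, c), h⟩, rfl, q, hp⟩

lemma of_leaf (he : e.fst ∈ leaves T) (hx : e.fst ≠ x) (h : T.Reachable e.fst x) :
    LeadsTo e x := by
  obtain ⟨e', hfst, he'⟩ := exists_dart hx h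
  have hsnd : e'.snd = e.snd := eq_of_mem_leaves he (hfst ▸ e'.adj) e.adj
  rwa [Dart.ext e e' (Prod.ext hfst.symm hsnd.symm)]

lemma exists_isPath (h : LeadsTo e x) (hx : x ∈ leaves T) {d : ℕ} (hd : IsThread e d) :
    ∃ (p : T.Walk e.fst (flow^[d] e).fst) (q : T.Walk (flow^[d] e).snd x),
      (p.append (Walk.cons (flow^[d] e).adj q)).IsPath ∧ p.length = d := by
  induction d with
  | zero =>
    obtain ⟨q, hq⟩ := h
    exact ⟨Walk.nil, q, hq, rfl⟩
  | succ d ih =>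
    obtain ⟨p, q, hpq, hlength⟩ := ih fun j hj => hd j (hj.trans d.lt_succ_self)
    have hdeg := hd d d.lt_succ_self
    rw [Function.iterate_succ_apply']
    generalize flow^[d] e = f at *
    cases q with
    | nil => exact absurd (hdeg.symm.trans hx) (by decide)
    | @cons _ c _ hc q =>
      have hcf : c ≠ f.fst := by
        rintro rfl
        exact ((Walk.cons_isPath_iff _ _).1 hpq.of_append_right).2 (by simp)
      obtain rfl := across_eq hdeg f.adj.symm hc hcf
      have hpath : ((p.concat f.adj).append (Walk.cons hc q)).IsPath := by
        rwa [Walk.concat_append]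
      have hlen : (p.concat f.adj).length = d + 1 := by rw [Walk.length_concat, hlength]
      exact ⟨p.concat f.adj, q, hpath, hlen⟩

lemma iterate_flow (h : LeadsTo e x) (hx : x ∈ leaves T) {d : ℕ} (hd : IsThread e d) :
    LeadsTo (flow^[d] e) x := by
  obtain ⟨p, q, hpq, -⟩ := h.exists_isPath hx hd
  exact ⟨q, hpq.of_append_right⟩

lemma exists_isPath_snd (h : LeadsTo e x) (hx : x ∈ leaves T) {d : ℕ} (hd : IsThread e d) :
    ∃ (p : T.Walk e.fst (flow^[d] e).snd) (q : T.Walk (flow^[d] e).snd x),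
      (p.append q).IsPath ∧ p.length = d + 1 := by
  obtain ⟨p, q, hpq, hlength⟩ := h.exists_isPath hx hd
  refine ⟨p.concat (flow^[d] e).adj, q, ?_, by rw [Walk.length_concat, hlength]⟩
  rwa [Walk.concat_append]

end LeadsTo

lemma iterate_flow_add_of_eq_symm {e e' : T.Dart} {r r' i : ℕ} (hi : i ≤ r')
    (h : flow^[r] e = (flow^[r'] e').symm) : flow^[r + i] e = (flow^[r' - i] e').symm := by
  obtain ⟨m, rfl⟩ := Nat.exists_eq_add_of_le hi
  rw [Nat.add_comm r i, Function.iterate_add_apply, h, Function.iterate_add_apply,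
    iterate_flow_symm, Nat.add_sub_cancel_left]

lemma IsThread.add_of_eq_symm {e e' : T.Dart} {r r' : ℕ} (he : IsThread e r) (he' : IsThread e' r')
    (h : flow^[r] e = (flow^[r'] e').symm) : IsThread e (r + r') := by
  intro j hj
  rcases lt_or_ge j r with hjr | hjr
  · exact he j hjr
  obtain ⟨i, rfl⟩ := Nat.exists_eq_add_of_le hjr
  obtain ⟨n, hn⟩ : ∃ n, r' - i = n + 1 := Nat.exists_eq_succ_of_ne_zero (by omega)
  rw [iterate_flow_add_of_eq_symm (by omega) h, hn]
  exact (congrArg (deg T) (fst_iterate_flow_succ n e')).trans (he' n (by omega))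

/-- The first `ℓ e` darts on the trajectories of all the darts `e` lie over pairwise distinct
edges. -/
lemma sum_le_ncard_edgeSet [Finite V] [Fintype T.Dart] {φ : T.Dart → T.Dart}
    (hφ : Function.Injective φ) (ℓ : T.Dart → ℕ)
    (source : ∀ ⦃e e' r⦄, r < ℓ e → 0 < ℓ e' → φ^[r] e = e' → r = 0)
    (opposite : ∀ ⦃e e' r r'⦄, r < ℓ e → r' < ℓ e' → φ^[r] e ≠ (φ^[r'] e').symm) :
    ∑ e, ℓ e ≤ T.edgeSet.ncard := by
  have of_le : ∀ {e e' r r'}, r' ≤ r → r < ℓ e → r' < ℓ e' → φ^[r] e = φ^[r'] e' →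
      e = e' ∧ r = r' := by
    intro e e' r r' hle hr hr' h
    obtain ⟨d, rfl⟩ := Nat.exists_eq_add_of_le hle
    rw [Function.iterate_add_apply] at h
    have hd := hφ.iterate r' h
    obtain rfl := source (by omega) (by omega) hd
    exact ⟨hd, rfl⟩
  have injective : Set.InjOn (fun s : Σ _ : T.Dart, ℕ => (φ^[s.2] s.1).edge)
      (Finset.univ.sigma fun e => Finset.range (ℓ e) : Finset (Σ _ : T.Dart, ℕ)) := by
    rintro ⟨e, r⟩ hr ⟨e', r'⟩ hr' h
    simp only [Finset.coe_sigma, Set.mem_sigma_iff, Finset.coe_range, Set.mem_Iio] at hr hr'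
    rcases (dart_edge_eq_iff _ _).1 h with h | h
    · rcases le_total r' r with hle | hle
      · obtain ⟨rfl, rfl⟩ := of_le hle hr.2 hr'.2 h
        rfl
      · obtain ⟨rfl, rfl⟩ := of_le hle hr'.2 hr.2 h.symm
        rfl
    · exact absurd h (opposite hr.2 hr'.2)
  calc ∑ e, ℓ e = (Finset.univ.sigma fun e => Finset.range (ℓ e)).card := by
        simp only [Finset.card_sigma, Finset.card_range]
    _ ≤ T.edgeSet.ncard := by
        rw [← Set.ncard_coe_finset]
        exact Set.ncard_le_ncard_of_injOn _ (fun s _ => (φ^[s.2] s.1).edge_mem) injective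
          (Set.toFinite _)

end Flow

section Charge

variable {C : Finset V} {e e' : T.Dart} {r r' : ℕ}

open Classical in
/-- The end-vertices in `C` that are adjacent in `G` to the source of the dart `e` and lie in its
direction. -/
noncomputable def targets (G : SimpleGraph V) (C : Finset V) (e : T.Dart) : Finset V :=
  C.filter fun x => LeadsTo e x ∧ G.Adj x e.fst

open Classical in
lemma targets_subset : targets G C e ⊆ C :=
  Finset.filter_subset _ _

open Classical in
lemma mem_targets : x ∈ targets G C e ↔ x ∈ C ∧ LeadsTo e x ∧ G.Adj x e.fst :=
  Finset.mem_filter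

open Classical in
/-- The number of darts on the trajectory of `e` that are charged to `e`: one for each target of
`e`, and `l` if the source of `e` is an end-vertex outside `C`. -/
noncomputable def charge (G : SimpleGraph V) (C : Finset V) (l : ℕ) (e : T.Dart) : ℕ :=
  (if e.fst ∈ leaves T \ C then l else 0) + (targets G C e).card

lemma disjoint_targets (h : ∀ x ∈ C, LeadsTo e x → ¬ LeadsTo e' x) :
    Disjoint (targets G C e) (targets G C e') :=
  Finset.disjoint_left.2 fun x hx hx' =>
    h x (mem_targets.1 hx).1 (mem_targets.1 hx).2.1 (mem_targets.1 hx').2.1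

lemma card_targets_add_card_targets_le (h : Disjoint (targets G C e) (targets G C e')) :
    (targets G C e).card + (targets G C e').card ≤ C.card := by
  classical
  rw [← Finset.card_union_of_disjoint h]
  exact Finset.card_le_card (Finset.union_subset targets_subset targets_subset)

lemma charge_eq_card_targets (he : e.fst ∉ leaves T \ C) :
    charge G C l e = (targets G C e).card := by
  rw [charge, if_neg he, zero_add]

lemma IsTreeOn.reachable_fst (hT : IsTreeOn T S) (e : T.Dart) (hx : x ∈ leaves T) :
    T.Reachable e.fst x :=
  hT.reachable (hT.mem_of_adj e.adj) (hT.mem_of_mem_leaves hx)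

lemma IsTreeOn.leadsTo_of_leaf (hT : IsTreeOn T S) (hC : ↑C ⊆ leaves T)
    (he : e.fst ∈ leaves T \ C) (hx : x ∈ C) : LeadsTo e x :=
  LeadsTo.of_leaf he.1 (fun h => he.2 (h ▸ hx)) (hT.reachable_fst e (hC hx))

lemma IsTreeOn.exists_leadsTo (hT : IsTreeOn T S) (hC : ↑C ⊆ leaves T) (hne : C.Nonempty)
    (he : 0 < charge G C l e) : ∃ x ∈ C, LeadsTo e x := by
  by_cases hleaf : e.fst ∈ leaves T \ C
  · obtain ⟨x, hx⟩ := hne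
    exact ⟨x, hx, hT.leadsTo_of_leaf hC hleaf hx⟩
  · rw [charge_eq_card_targets hleaf] at he
    obtain ⟨x, hx⟩ := Finset.card_pos.1 he
    exact ⟨x, (mem_targets.1 hx).1, (mem_targets.1 hx).2.1⟩

namespace HasPrivateThreads

lemma charge_eq_of_leaf (h : HasPrivateThreads G T l) (hC : ↑C ⊆ leaves T)
    (he : e.fst ∈ leaves T \ C) : charge G C l e = l := by
  have htargets : targets G C e = ∅ := Finset.eq_empty_of_forall_notMem fun x hx =>
    h.isIndSet (hC (mem_targets.1 hx).1) he.1 (mem_targets.1 hx).2.2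
  rw [charge, if_pos he, htargets, Finset.card_empty, add_zero]

lemma isPrivate_snd_of_leaf (h : HasPrivateThreads G T l) (hx : x ∈ leaves T)
    (he : e.fst ∈ leaves T) (hex : LeadsTo e x) (hr : IsThread e r) (hlt : r + 1 < l) :
    deg T (flow^[r] e).snd = 2 ∧ IsPrivate G T e.fst (flow^[r] e).snd := by
  obtain ⟨p, q, hpq, hlen⟩ := hex.exists_isPath_snd hx hr
  have hpriv := h.of_leaf he p hpq.of_append_left (hlen.trans_lt hlt)
  refine ⟨hpriv.1 fun heq => ?_, hpriv⟩
  have hnil := Walk.length_eq_zero_iff.2 (hpq.of_append_left.nil_iff_eq.2 heq.symm)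
  omega

lemma isPrivate_snd_of_mem_targets (h : HasPrivateThreads G T l) (hC : ↑C ⊆ leaves T)
    (hx : x ∈ targets G C e) (hr : IsThread e r) (hle : r + 1 ≤ l) :
    IsPrivate G T x (flow^[r] e).snd := by
  obtain ⟨hxC, hex, hadj⟩ := mem_targets.1 hx
  obtain ⟨p, q, hpq, hlen⟩ := hex.exists_isPath_snd (hC hxC) hr
  exact h.of_neighbor (hC hxC) hadj p q hpq (by omega) (by omega)

/-- A vertex private to two different end-vertices has degree two and is adjacent in `G` to no
end-vertex at all. -/
lemma deg_snd_eq_two_and_not_adj (h : HasPrivateThreads G T l) (hT : IsTreeOn T S)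
    (hC : ↑C ⊆ leaves T) (hne : C.Nonempty) (hCl : C.card ≤ l + 1) (hr : IsThread e r)
    (hlt : r + 1 < charge G C l e) :
    deg T (flow^[r] e).snd = 2 ∧ ∀ x ∈ C, ¬ G.Adj (flow^[r] e).snd x := by
  by_cases hleaf : e.fst ∈ leaves T \ C
  · rw [h.charge_eq_of_leaf hC hleaf] at hlt
    obtain ⟨x, hx⟩ := hne
    obtain ⟨hdeg, hpriv⟩ := h.isPrivate_snd_of_leaf (hC hx) hleaf.1
      (hT.leadsTo_of_leaf hC hleaf hx) hr hlt
    exact ⟨hdeg, fun y hy => hpriv.2 y (hC hy) (ne_of_mem_of_not_mem hy hleaf.2)⟩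
  · rw [charge_eq_card_targets hleaf] at hlt
    have hcard := Finset.card_le_card (targets_subset (G := G) (C := C) (e := e))
    obtain ⟨x, hx, x', hx', hxx'⟩ := Finset.one_lt_card.1 (by omega : 1 < (targets G C e).card)
    have hpriv := h.isPrivate_snd_of_mem_targets hC hx hr (by omega)
    have hpriv' := h.isPrivate_snd_of_mem_targets hC hx' hr (by omega)
    constructor
    · by_cases hv : (flow^[r] e).snd = x
      · exact hpriv'.1 (hv.trans_ne hxx')
      · exact hpriv.1 hv
    · intro y hy
      rcases eq_or_ne y x with rfl | hyx
      · exact hpriv'.2 y (hC hy) hxx'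
      · exact hpriv.2 y (hC hy) hyx

lemma isThread (h : HasPrivateThreads G T l) (hT : IsTreeOn T S) (hC : ↑C ⊆ leaves T)
    (hne : C.Nonempty) (hCl : C.card ≤ l + 1) (hr : r < charge G C l e) : IsThread e r := by
  induction r with
  | zero => exact fun j hj => absurd hj j.not_lt_zero
  | succ r ih =>
    have hthread := ih (r.lt_succ_self.trans hr)
    intro j hj
    rcases (Nat.lt_succ_iff_lt_or_eq).1 hj with hj | rfl
    · exact hthread j hj
    · exact (h.deg_snd_eq_two_and_not_adj hT hC hne hCl hthread hr).1

lemma eq_zero_of_iterate_flow_eq (h : HasPrivateThreads G T l) (hT : IsTreeOn T S)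
    (hC : ↑C ⊆ leaves T) (hne : C.Nonempty) (hCl : C.card ≤ l + 1)
    (hr : r < charge G C l e) (he' : 0 < charge G C l e') (heq : flow^[r] e = e') : r = 0 := by
  cases r with
  | zero => rfl
  | succ s =>
    obtain ⟨hdeg, hadj⟩ := h.deg_snd_eq_two_and_not_adj hT hC hne hCl
      (h.isThread hT hC hne hCl (s.lt_succ_self.trans hr)) hr
    rw [← fst_iterate_flow_succ, heq] at hdeg hadj
    have hleaf : e'.fst ∉ leaves T \ C := fun hl => absurd (hdeg.symm.trans hl.1) (by decide)
    rw [charge_eq_card_targets hleaf] at he'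
    obtain ⟨x, hx⟩ := Finset.card_pos.1 he'
    obtain ⟨hxC, -, hxe'⟩ := mem_targets.1 hx
    exact absurd hxe'.symm (hadj x hxC)

lemma iterate_flow_ne_symm (h : HasPrivateThreads G T l) (hT : IsTreeOn T S) (hC : ↑C ⊆ leaves T)
    (hne : C.Nonempty) (hCl : C.card ≤ l + 1) (hr : r < charge G C l e)
    (hr' : r' < charge G C l e') : flow^[r] e ≠ (flow^[r'] e').symm := by
  intro heq
  have hthread := h.isThread hT hC hne hCl hr
  have hthread' := h.isThread hT hC hne hCl hr'
  have no_common : ∀ x ∈ C, LeadsTo e x → ¬ LeadsTo e' x := fun x hx hex hex' =>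
    (hex'.iterate_flow (hC hx) hthread').not_symm hT.isAcyclic
      (heq ▸ hex.iterate_flow (hC hx) hthread)
  obtain ⟨y, hy, hey⟩ := hT.exists_leadsTo hC hne (pos_of_gt hr)
  obtain ⟨y', hy', hey'⟩ := hT.exists_leadsTo hC hne (pos_of_gt hr')
  have hleaf : e.fst ∉ leaves T \ C := fun hl =>
    no_common y' hy' (hT.leadsTo_of_leaf hC hl hy') hey'
  have hleaf' : e'.fst ∉ leaves T \ C := fun hl =>
    no_common y hy hey (hT.leadsTo_of_leaf hC hl hy)
  rw [charge_eq_card_targets hleaf] at hr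
  rw [charge_eq_card_targets hleaf'] at hr'
  have hdisjoint := disjoint_targets (G := G) no_common
  have hcard := card_targets_add_card_targets_le hdisjoint
  obtain ⟨x, hx⟩ := Finset.card_pos.1 (pos_of_gt hr)
  obtain ⟨x', hx'⟩ := Finset.card_pos.1 (pos_of_gt hr')
  have hpriv := h.isPrivate_snd_of_mem_targets hC hx (hthread.add_of_eq_symm hthread' heq)
    (by omega)
  rw [iterate_flow_add_of_eq_symm le_rfl heq, Nat.sub_self] at hpriv
  have hx'C := (mem_targets.1 hx').1
  exact hpriv.2 x' (hC hx'C) (fun hxx' => Finset.disjoint_left.1 hdisjoint hx (hxx' ▸ hx'))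
    (mem_targets.1 hx').2.2.symm

lemma sum_charge_le (h : HasPrivateThreads G T l) [Finite V] [Fintype T.Dart] (hT : IsTreeOn T S)
    (hC : ↑C ⊆ leaves T) (hne : C.Nonempty) (hCl : C.card ≤ l + 1) :
    ∑ e : T.Dart, charge G C l e ≤ T.edgeSet.ncard :=
  sum_le_ncard_edgeSet flow_injective (charge G C l)
    (fun _ _ _ => h.eq_zero_of_iterate_flow_eq hT hC hne hCl)
    (fun _ _ _ _ => h.iterate_flow_ne_symm hT hC hne hCl)

end HasPrivateThreads

lemma mul_ncard_le_sum_ite [Finite V] [Fintype T.Dart] {A : Set V} [DecidablePred (· ∈ A)]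
    (hA : A ⊆ leaves T) : l * A.ncard ≤ ∑ e : T.Dart, if e.fst ∈ A then l else 0 := by
  classical
  have hsubset : A ⊆ (Finset.univ.filter fun e : T.Dart => e.fst ∈ A).image fun e => e.fst := by
    intro x hx
    obtain ⟨y, hxy⟩ := exists_adj_of_mem_leaves (hA hx)
    simp only [Finset.coe_image, Finset.coe_filter, Finset.mem_univ, true_and]
    exact ⟨⟨(x, y), hxy⟩, hx, rfl⟩
  rw [← Finset.sum_filter, Finset.sum_const, smul_eq_mul, mul_comm]
  refine Nat.mul_le_mul_right l (le_trans ?_ (Finset.card_image_le (f := fun e : T.Dart => e.fst)))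
  exact (Set.ncard_le_ncard hsubset).trans_eq (Set.ncard_coe_finset _)

lemma IsTreeOn.degree_le_card_leadsTo [Fintype V] [DecidableRel G.Adj] [Fintype T.Dart]
    [DecidablePred fun e : T.Dart => LeadsTo e x ∧ G.Adj x e.fst] (hT : IsTreeOn T S)
    (hx : x ∈ S) (hnbr : ∀ z, G.Adj x z → z ∈ S) :
    G.degree x ≤ (Finset.univ.filter fun e : T.Dart => LeadsTo e x ∧ G.Adj x e.fst).card := by
  classical
  have hsubset : G.neighborFinset x ⊆
      (Finset.univ.filter fun e : T.Dart => LeadsTo e x ∧ G.Adj x e.fst).image fun e => e.fst := by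
    intro z hz
    rw [mem_neighborFinset] at hz
    obtain ⟨e, rfl, he⟩ := LeadsTo.exists_dart hz.ne' (hT.reachable (hnbr z hz) hx)
    exact Finset.mem_image_of_mem _ (Finset.mem_filter.2 ⟨Finset.mem_univ e, he, hz⟩)
  exact (Finset.card_le_card hsubset).trans Finset.card_image_le

lemma IsTreeOn.sum_degree_le_sum_card_targets [Fintype V] [DecidableRel G.Adj] [Fintype T.Dart]
    (hT : IsTreeOn T S) (hCS : ↑C ⊆ S) (hnbr : ∀ x ∈ C, ∀ z, G.Adj x z → z ∈ S) :
    ∑ x ∈ C, G.degree x ≤ ∑ e : T.Dart, (targets G C e).card := by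
  classical
  calc ∑ x ∈ C, G.degree x
      ≤ ∑ x ∈ C, (Finset.univ.filter fun e : T.Dart => LeadsTo e x ∧ G.Adj x e.fst).card :=
        Finset.sum_le_sum fun x hx => hT.degree_le_card_leadsTo (hCS hx) (hnbr x hx)
    _ = ∑ e : T.Dart, (C.filter fun x => LeadsTo e x ∧ G.Adj x e.fst).card :=
        (Finset.sum_card_bipartiteAbove_eq_sum_card_bipartiteBelow _).symm
    _ = ∑ e : T.Dart, (targets G C e).card := by
        refine Finset.sum_congr rfl fun e _ => congrArg Finset.card (Finset.ext fun x => ?_)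
        rw [mem_targets, Finset.mem_filter]

lemma HasPrivateThreads.mul_ncard_add_sum_degree_lt [Fintype V] [DecidableRel G.Adj]
    (h : HasPrivateThreads G T l) (hT : IsTreeOn T S) (hC : ↑C ⊆ leaves T) (hne : C.Nonempty)
    (hCl : C.card ≤ l + 1) (hnbr : ∀ x ∈ C, ∀ z, G.Adj x z → z ∈ S) :
    l * (leaves T \ C).ncard + ∑ x ∈ C, G.degree x < S.ncard := by
  classical
  have hCS : ↑C ⊆ S := fun x hx => hT.mem_of_mem_leaves (hC hx)
  calc l * (leaves T \ C).ncard + ∑ x ∈ C, G.degree x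
      ≤ ∑ e : T.Dart, charge G C l e := by
        simp only [charge, Finset.sum_add_distrib]
        exact Nat.add_le_add (mul_ncard_le_sum_ite Set.sdiff_subset)
          (hT.sum_degree_le_sum_card_targets hCS hnbr)
    _ ≤ T.edgeSet.ncard := h.sum_charge_le hT hC hne hCl
    _ < S.ncard := Nat.lt_of_succ_le hT.ncard_edgeSet.le

end Charge

theorem theorem3_general [Fintype V] (G : SimpleGraph V) [DecidableRel G.Adj]
    (k l m : ℕ) (hk : 1 ≤ k) (hl : 1 ≤ l) (hm : 1 ≤ m) (hmk : m ≤ k + 1) (hml : m ≤ l + 1)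
    (h : (maxKEndedOrder G (k + 1) : ℕ∞) ≤
      minDegreeSum G m + ((l * (k + 1 - m) : ℕ) : ℕ∞)) :
    maxKEndedOrder G k + l ≥ maxKEndedOrder G (k + 1) + 1 := by
  by_contra! hlt
  obtain ⟨T, S, hT, hTG, hS, hleaves⟩ := exists_isTreeOn_ncard_eq (G := G) hk (by omega)
  have hrigid := rigidAbove_maxKEndedOrder G hk
  have hthreads := hrigid.hasPrivateThreads hT hTG hleaves hl (by omega)
  have hcard := (hrigid hT hTG (by omega) hleaves).1
  obtain ⟨C, hC, hCm⟩ := Set.exists_subset_card_eq (hcard.symm ▸ hmk)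
  lift C to Finset V using C.toFinite
  rw [Set.ncard_coe_finset] at hCm
  have hnbr : ∀ x ∈ C, ∀ z, G.Adj x z → z ∈ S := fun x hx z hxz => by
    by_contra hz
    exact (hT.ncard_lt_maxKEndedOrder hTG hleaves (hC hx) hxz hz).ne hS
  have hlower := hthreads.mul_ncard_add_sum_degree_lt hT hC (Finset.card_pos.1 (by omega))
    (by omega) hnbr
  rw [Set.ncard_sdiff hC, hcard, Set.ncard_coe_finset, hCm, hS] at hlower
  have hσ : minDegreeSum G m ≤ ∑ x ∈ C, (G.degree x : ℕ∞) :=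
    iInf₂_le C ⟨hCm, fun u hu v hv => hthreads.isIndSet (hC hu) (hC hv)⟩
  have hupper := h.trans (add_le_add_left hσ _)
  norm_cast at hupper
  omega

/-- **Theorem 3.** If `G` is connected, `k, λ, m` are positive integers with
`m ≤ min{k, λ} + 1`, and `σ_m ≥ t_{k+1} - λ(k - m + 1)`, then
`t_k ≥ t_{k+1} - λ + 1`. -/
theorem theorem3 [Fintype V] (G : SimpleGraph V) [DecidableRel G.Adj]
    (hG : G.Connected) (k l m : ℕ) (hk : 1 ≤ k) (hl : 1 ≤ l) (hm : 1 ≤ m)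
    (hmk : m ≤ k + 1) (hml : m ≤ l + 1)
    (h : (maxKEndedOrder G (k + 1) : ℕ∞) ≤
      minDegreeSum G m + ((l * (k + 1 - m) : ℕ) : ℕ∞)) :
    maxKEndedOrder G k + l ≥ maxKEndedOrder G (k + 1) + 1 :=
  theorem3_general G k l m hk hl hm hmk hml h
end

section
/- Let G be a connected graph with σ_{k+1} ≥ t_{k+1} for some positive integer k. Then t_k ≥ t_{k+1} − k + 1. (Corollary 4) -/
open SimpleGraph

variable {V : Type*}

/-! Suppose that `t_k + k ≤ t_{k+1}` and let `T` be a largest `(k + 1)`-ended tree. It has exactly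
`k + 1` leaves, and maximality keeps all neighbours of its leaves inside `T`. The leaves are
independent: an edge between two of them would close a cycle, and breaking that cycle at a branch
vertex would leave a `k`-ended tree of the same order.

Let `x` be a neighbour of a leaf `v`, let `d` be the first dart on the path of `T` from `x` to `v`,
and let `r ≤ k + 1` be the number of leaves beyond `d` that are adjacent to `x`. Charge to `d` the
first `r` edges of the path. Replacing fewer than `k` vertices of the path by the edge `xv` must not
save a leaf, so this part of the path does not branch; adding also an edge from a vertex of the path
to another leaf closes a cycle, so there is no such edge. Hence the edges charged to different darts
are disjoint, and the degree sum of the leaves is at most the number of edges of `T`, which is less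
than `t_{k+1}`. -/

namespace KEnded

section Valency

variable {X Y : Type*}

/-- The degree of a vertex, as the `ncard` of its neighbour set: the form in which the leaves of a
`k`-ended tree are counted. -/
noncomputable def valency (F : SimpleGraph X) (v : X) : ℕ :=
  (F.neighborSet v).ncard

/-- The set of end-vertices of a graph. -/
def leaves (F : SimpleGraph X) : Set X :=
  {v | valency F v = 1}

/-- The total excess of the degrees over two, in which truncated subtraction makes leaves count `0`;
in a nontrivial tree it is two less than the number of leaves. -/
noncomputable def excess (F : SimpleGraph X) : ℕ :=
  ∑ᶠ v, (valency F v - 2)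

lemma valency_eq_degree (F : SimpleGraph X) (v : X) [Fintype (F.neighborSet v)] :
    valency F v = F.degree v := by
  rw [valency, Set.ncard_eq_toFinset_card', ← card_neighborFinset_eq_degree, neighborFinset_def]

lemma valency_le_of_copy [Finite Y] {F : SimpleGraph X} {F' : SimpleGraph Y} (f : Copy F F')
    (v : X) : valency F v ≤ valency F' (f v) :=
  Set.ncard_le_ncard_of_injOn f (fun _ hw => f.toHom.map_adj hw) f.injective.injOn

lemma excess_eq_sum [Fintype X] (F : SimpleGraph X) : excess F = ∑ v, (valency F v - 2) :=
  finsum_eq_sum_of_fintype _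

lemma excess_le_of_copy [Finite X] [Finite Y] {F : SimpleGraph X} {F' : SimpleGraph Y}
    (f : Copy F F') : excess F ≤ excess F' := by
  have := Fintype.ofFinite X
  have := Fintype.ofFinite Y
  calc excess F
      = ∑ v, (valency F v - 2) := excess_eq_sum F
    _ ≤ ∑ v, (valency F' (f v) - 2) :=
        Finset.sum_le_sum fun v _ => Nat.sub_le_sub_right (valency_le_of_copy f v) 2
    _ = ∑ w ∈ Finset.univ.map ⟨f, f.injective⟩, (valency F' w - 2) :=
        (Finset.sum_map _ ⟨f, f.injective⟩ fun w => valency F' w - 2).symm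
    _ ≤ ∑ w, (valency F' w - 2) := Finset.sum_le_univ_sum_of_nonneg fun _ => Nat.zero_le _
    _ = excess F' := (excess_eq_sum F').symm

lemma valency_mono [Finite X] {F F' : SimpleGraph X} (h : F ≤ F') (v : X) :
    valency F v ≤ valency F' v :=
  valency_le_of_copy (Copy.ofLE F F' h) v

lemma valency_deleteEdges_lt [Finite X] {F : SimpleGraph X} {E : Set (Sym2 X)} {v w : X}
    (h : F.Adj v w) (hE : s(v, w) ∈ E) : valency (F.deleteEdges E) v < valency F v :=
  Set.ncard_lt_ncard ((Set.ssubset_iff_of_subset fun _ hu => F.deleteEdges_le E hu).2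
    ⟨w, h, fun hw => (deleteEdges_adj.1 hw).2 hE⟩) (Set.toFinite _)

lemma valency_sup_edge_le [Finite X] (F : SimpleGraph X) (a b v : X) :
    valency (F ⊔ edge a b) v ≤ valency F v + 1 := by
  classical
  refine le_trans (Set.ncard_le_ncard (t := insert (if v = a then b else a) (F.neighborSet v))
    (fun w hw => ?_) (Set.toFinite _)) (Set.ncard_insert_le _ _)
  simp only [mem_neighborSet, sup_adj, edge_adj, Set.mem_insert_iff] at hw ⊢
  grind

lemma valency_sup_edge_of_ne (F : SimpleGraph X) {a b v : X} (ha : v ≠ a) (hb : v ≠ b) :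
    valency (F ⊔ edge a b) v = valency F v := by
  have hnbrs : (F ⊔ edge a b).neighborSet v = F.neighborSet v := by
    ext w
    simp [edge_adj, ha, hb]
  rw [valency, valency, hnbrs]

lemma sup_edge_adj (F : SimpleGraph X) {a b : X} (h : a ≠ b) : (F ⊔ edge a b).Adj a b :=
  Or.inr ((edge_adj ..).2 ⟨Or.inl ⟨rfl, rfl⟩, h⟩)

lemma sup_edge_le {F F' : SimpleGraph X} {a b : X} (hF : F ≤ F') (h : F'.Adj a b) :
    F ⊔ edge a b ≤ F' :=
  sup_le hF ((edge_le_iff _).2 (Or.inr h))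

lemma excess_le_excess [Finite X] {F F' : SimpleGraph X}
    (h : ∀ v, valency F v ≤ max 2 (valency F' v)) : excess F ≤ excess F' := by
  have := Fintype.ofFinite X
  rw [excess_eq_sum, excess_eq_sum]
  refine Finset.sum_le_sum fun v _ => ?_
  have := h v
  omega

lemma excess_lt_excess [Finite X] {F F' : SimpleGraph X}
    (h : ∀ v, valency F v ≤ max 2 (valency F' v)) {b : X} (hb : valency F b < valency F' b)
    (hb2 : 2 < valency F' b) : excess F < excess F' := by
  have := Fintype.ofFinite X
  rw [excess_eq_sum, excess_eq_sum]
  refine Finset.sum_lt_sum (fun v _ => ?_) ⟨b, Finset.mem_univ b, by omega⟩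
  have := h v
  omega

lemma valency_pos [Finite X] [Nontrivial X] {F : SimpleGraph X} (hF : F.Connected) (v : X) :
    0 < valency F v :=
  (Set.ncard_pos (Set.toFinite _)).2 (hF.preconnected.exists_adj_of_nontrivial v)

lemma ncard_leaves_eq_excess_add_two [Finite X] [Nontrivial X] {T : SimpleGraph X}
    (hT : T.IsTree) : (leaves T).ncard = excess T + 2 := by
  classical
  have := Fintype.ofFinite X
  have handshake : ∑ v, valency T v + 2 = 2 * Fintype.card X := by
    simp only [valency_eq_degree, T.sum_degrees_eq_twice_card_edges]
    have := hT.card_edgeFinset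
    omega
  have count : ∑ v, (valency T v - 2 + 2) = ∑ v, (valency T v + if valency T v = 1 then 1 else 0) :=
    Finset.sum_congr rfl fun v _ => by
      have := valency_pos hT.connected v
      split_ifs <;> omega
  have hcard : (leaves T).ncard = ∑ v, if valency T v = 1 then 1 else 0 := by
    rw [leaves, Set.ncard_eq_toFinset_card', Finset.sum_boole, Set.toFinset_ofPred, Nat.cast_id]
  simp only [Finset.sum_add_distrib, ← hcard, Finset.sum_const, Finset.card_univ,
    smul_eq_mul] at count
  rw [excess_eq_sum]
  omega

end Valency

section Order

variable {X : Type*} {G : SimpleGraph V} {F : SimpleGraph X} {k : ℕ}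

lemma bddAbove_ncard_isKEndedTree [Finite V] (G : SimpleGraph V) (k : ℕ) :
    BddAbove {n | ∃ H : G.Subgraph, IsKEndedTree G k H ∧ H.verts.ncard = n} := by
  refine ⟨Nat.card V, ?_⟩
  rintro _ ⟨H, -, rfl⟩
  exact Set.ncard_le_card _

lemma ncard_verts_le_maxKEndedOrder [Finite V] {H : G.Subgraph} (hH : IsKEndedTree G k H) :
    H.verts.ncard ≤ maxKEndedOrder G k :=
  le_csSup (bddAbove_ncard_isKEndedTree G k) ⟨H, hH, rfl⟩

lemma ncard_neighborSet_map (f : Copy F G) (H : F.Subgraph) (x : X) :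
    ((H.map f.toHom).neighborSet (f x)).ncard = (H.neighborSet x).ncard := by
  have himage : (H.map f.toHom).neighborSet (f x) = f '' H.neighborSet x := by
    ext w
    constructor
    · rintro ⟨a, b, hab, ha, rfl⟩
      obtain rfl : a = x := f.injective ha
      exact ⟨b, hab, rfl⟩
    · rintro ⟨b, hb, rfl⟩
      exact ⟨x, b, hb, rfl, rfl⟩
  exact himage ▸ Set.ncard_image_of_injective _ f.injective

lemma ncard_verts_map (f : Copy F G) (H : F.Subgraph) :
    (H.map f.toHom).verts.ncard = H.verts.ncard :=
  Set.ncard_image_of_injective _ f.injective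

lemma endVertexCount_map (f : Copy F G) (H : F.Subgraph) :
    endVertexCount (H.map f.toHom) = endVertexCount H := by
  rw [endVertexCount, endVertexCount, ← Set.ncard_image_of_injective _ f.injective]
  congr 1
  ext w
  constructor
  · rintro ⟨⟨x, hx, rfl⟩, hleaf⟩
    exact ⟨x, ⟨hx, (ncard_neighborSet_map f H x).symm.trans hleaf⟩, rfl⟩
  · rintro ⟨x, ⟨hx, hleaf⟩, rfl⟩
    exact ⟨⟨x, hx, rfl⟩, (ncard_neighborSet_map f H x).trans hleaf⟩

lemma isKEndedTree_map (f : Copy F G) {H : F.Subgraph} (hH : IsKEndedTree F k H) :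
    IsKEndedTree G k (H.map f.toHom) := by
  have e := f.isoSubgraphMap H
  obtain ⟨hT, hk⟩ | ⟨hk, hconn, hcyc⟩ := hH
  · exact Or.inl ⟨e.isTree_iff.1 hT, (endVertexCount_map f H).trans_le hk⟩
  · refine Or.inr ⟨hk, ⟨e.connected_iff.1 hconn.coe⟩, ?_⟩
    refine hcyc.imp (ncard_verts_map f H).trans_le ?_
    rintro h2 _ ⟨x, hx, rfl⟩
    exact (ncard_neighborSet_map f H x).trans (h2 x hx)

lemma maxKEndedOrder_le_of_copy [Finite V] (f : Copy F G) (k : ℕ) :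
    maxKEndedOrder F k ≤ maxKEndedOrder G k := by
  refine csSup_le' ?_
  rintro _ ⟨H, hH, rfl⟩
  rw [← ncard_verts_map f]
  exact ncard_verts_le_maxKEndedOrder (isKEndedTree_map f hH)

lemma card_le_maxKEndedOrder_of_isKEndedTree_top [Finite X] (h : IsKEndedTree F k ⊤) :
    Nat.card X ≤ maxKEndedOrder F k := by
  rw [← Set.ncard_univ]
  exact ncard_verts_le_maxKEndedOrder h

lemma card_le_maxKEndedOrder_of_isTree [Finite X] (hF : F.IsTree) (hk : (leaves F).ncard ≤ k) :
    Nat.card X ≤ maxKEndedOrder F k := by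
  refine card_le_maxKEndedOrder_of_isKEndedTree_top
    (Or.inl ⟨Subgraph.topIso.isTree_iff.2 hF, ?_⟩)
  simpa [endVertexCount, leaves, valency] using hk

lemma card_le_maxKEndedOrder_of_isCycle [Finite X] (hF : F.Connected)
    (hcyc : Nat.card X ≤ 2 ∨ ∀ v, valency F v = 2) (hk : 1 ≤ k) :
    Nat.card X ≤ maxKEndedOrder F k := by
  refine card_le_maxKEndedOrder_of_isKEndedTree_top
    (Or.inr ⟨hk, ⟨Subgraph.topIso.connected_iff.2 hF⟩, ?_⟩)
  simpa [valency] using hcyc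

lemma card_le_maxKEndedOrder_of_connected [Finite X] (hF : F.Connected)
    (hk : excess F + 2 ≤ k) : Nat.card X ≤ maxKEndedOrder F k := by
  rcases subsingleton_or_nontrivial X with _ | _
  · refine card_le_maxKEndedOrder_of_isCycle hF (Or.inl ?_) (by omega)
    exact Finite.card_le_one_iff_subsingleton.2 ‹_› |>.trans one_le_two
  · obtain ⟨T, hTF, hT⟩ := hF.exists_isTree_le
    have hexcess : excess T ≤ excess F := excess_le_of_copy (Copy.ofLE T F hTF)
    have hleaves := ncard_leaves_eq_excess_add_two hT
    exact (card_le_maxKEndedOrder_of_isTree hT (by omega)).trans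
      (maxKEndedOrder_le_of_copy (Copy.ofLE T F hTF) k)

lemma mem_support_of_isCycle_of_forall_valency_eq_two [Finite X] (hF : F.Connected) {a : X}
    {p : F.Walk a a} (hp : p.IsCycle) (h2 : ∀ v ∈ p.support, valency F v = 2) (v : X) :
    v ∈ p.support := by
  have hclosed : ∀ u ∈ p.support, ∀ w, F.Adj u w → w ∈ p.support := by
    intro u hu w huw
    have hnbrs : p.toSubgraph.neighborSet u = F.neighborSet u :=
      Set.eq_of_subset_of_ncard_le (p.toSubgraph.neighborSet_subset u)
        ((h2 u hu).trans (hp.ncard_neighborSet_toSubgraph_eq_two hu).symm).le (Set.toFinite _)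
    have hadj : p.toSubgraph.Adj u w := by
      rwa [← Subgraph.mem_neighborSet, hnbrs]
    exact p.mem_verts_toSubgraph.1 (p.toSubgraph.edge_vert hadj.symm)
  by_contra hv
  obtain ⟨q⟩ := hF.preconnected a v
  obtain ⟨d, -, hd, hd'⟩ := q.exists_boundary_dart {w | w ∈ p.support} p.start_mem_support hv
  exact hd' (hclosed _ hd _ d.adj)

lemma exists_connected_excess_lt_of_isCycle [Finite X] (hF : F.Connected) {a b : X}
    {p : F.Walk a a} (hp : p.IsCycle) (hb : b ∈ p.support) (h2 : valency F b ≠ 2) :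
    ∃ F' ≤ F, F'.Connected ∧ excess F' < excess F := by
  have hpb := hp.ncard_neighborSet_toSubgraph_eq_two hb
  obtain ⟨w, hw⟩ : (p.toSubgraph.neighborSet b).Nonempty :=
    Set.nonempty_of_ncard_ne_zero (by omega)
  have hbridge : ¬ F.IsBridge s(b, w) := fun h =>
    h.notMem_edges_of_isCycle hp (p.mem_edges_toSubgraph.1 hw)
  have hle : F.deleteEdges {s(b, w)} ≤ F := F.deleteEdges_le _
  have hge : 2 ≤ valency F b :=
    hpb ▸ Set.ncard_le_ncard (p.toSubgraph.neighborSet_subset b) (Set.toFinite _)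
  exact ⟨_, hle, hF.connected_delete_edge_of_not_isBridge hbridge,
    excess_lt_excess (fun v => le_max_of_le_right (valency_mono hle v))
      (valency_deleteEdges_lt (p.toSubgraph.adj_sub hw) rfl) (by omega)⟩

-- If the graph is not itself a cycle, some cycle passes through a branch vertex; deleting an edge
-- of the cycle there keeps the graph connected and lowers the excess.
lemma card_le_maxKEndedOrder_of_not_isAcyclic [Finite X] (hF : F.Connected)
    (hcyc : ¬ F.IsAcyclic) (hk : excess F + 1 ≤ k) : Nat.card X ≤ maxKEndedOrder F k := by
  obtain ⟨a, p, hp⟩ : ∃ a, ∃ p : F.Walk a a, p.IsCycle := by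
    simpa [IsAcyclic] using hcyc
  by_cases h2 : ∀ v ∈ p.support, valency F v = 2
  · exact card_le_maxKEndedOrder_of_isCycle hF (Or.inr fun v =>
      h2 v (mem_support_of_isCycle_of_forall_valency_eq_two hF hp h2 v)) (by omega)
  · push Not at h2
    obtain ⟨b, hb, hb2⟩ := h2
    obtain ⟨F', hle, hF', hlt⟩ := exists_connected_excess_lt_of_isCycle hF hp hb hb2
    exact (card_le_maxKEndedOrder_of_connected hF' (by omega)).trans
      (maxKEndedOrder_le_of_copy (Copy.ofLE F' F hle) k)

variable {F₁ F₂ : SimpleGraph V} {S : Set V}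

lemma ncard_le_maxKEndedOrder_of_connected_induce [Finite V] (hF : F₁ ≤ G)
    (hS : (F₁.induce S).Connected) (hk : excess F₁ + 2 ≤ k) : S.ncard ≤ maxKEndedOrder G k := by
  have f : Copy (F₁.induce S) F₁ := (Embedding.induce S).toCopy
  exact (card_le_maxKEndedOrder_of_connected hS
    ((Nat.add_le_add_right (excess_le_of_copy f) 2).trans hk)).trans
    (maxKEndedOrder_le_of_copy ((Copy.ofLE F₁ G hF).comp f) k)

lemma ncard_le_maxKEndedOrder_of_connected_induce_of_adj [Finite V] (hF : F₂ ≤ G)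
    (hF₁ : F₁ ≤ F₂) (hS : (F₁.induce S).Connected) {a b : V} (ha : a ∈ S) (hb : b ∈ S)
    (hab : F₂.Adj a b) (hab₁ : ¬ F₁.Adj a b) (hk : excess F₂ + 1 ≤ k) :
    S.ncard ≤ maxKEndedOrder G k := by
  have f : Copy (F₂.induce S) F₂ := (Embedding.induce S).toCopy
  have hle : F₁.induce S ≤ F₂.induce S := fun _ _ h => hF₁ h
  have hcyc : ¬ (F₂.induce S).IsAcyclic := fun hacyclic => by
    have hmin := (isTree_iff_minimal_connected.1 ⟨hS.mono hle, hacyclic⟩).2 hS hle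
    exact hab₁ (hmin (show (F₂.induce S).Adj ⟨a, ha⟩ ⟨b, hb⟩ from hab))
  exact (card_le_maxKEndedOrder_of_not_isAcyclic (hS.mono hle) hcyc
    ((Nat.add_le_add_right (excess_le_of_copy f) 1).trans hk)).trans
    (maxKEndedOrder_le_of_copy ((Copy.ofLE F₂ G hF).comp f) k)

end Order

section Side

variable {T : SimpleGraph V} {d d' : T.Dart} {v : V}

/-- The vertices on the far side of a dart: in a tree, the component containing `d.snd` after
deleting the edge of `d`. -/
def side (d : T.Dart) : Set V :=
  {v | T.dist v d.snd < T.dist v d.fst}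

lemma snd_mem_side (d : T.Dart) : d.snd ∈ side d := by
  simpa [side] using d.adj.symm.reachable.pos_dist_of_ne d.adj.ne'

lemma fst_notMem_side (d : T.Dart) : d.fst ∉ side d := by
  simp [side]

lemma side_symm (hT : T.IsTree) (d : T.Dart) : side d.symm = (side d)ᶜ := by
  ext v
  have := hT.dist_ne_of_adj v d.adj
  simp only [side, Dart.symm, Prod.fst_swap, Prod.snd_swap, Set.mem_ofPred_eq, Set.mem_compl_iff]
  omega

lemma mk_ne_edge {v w : V} (h : v ∈ side d ↔ w ∈ side d) : s(v, w) ≠ d.edge := by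
  intro heq
  have hfst := fst_notMem_side d
  have hsnd := snd_mem_side d
  rcases Sym2.eq_iff.1 heq with ⟨rfl, rfl⟩ | ⟨rfl, rfl⟩
  · exact hfst (h.2 hsnd)
  · exact hfst (h.1 hsnd)

lemma connected_induce_side (hT : T.Connected) (d : T.Dart) : (T.induce (side d)).Connected := by
  classical
  refine induce_connected_of_patches d.snd (snd_mem_side d) fun {v} hv => ?_
  obtain ⟨p, hp⟩ := hT.exists_walk_length_eq_dist v d.snd
  refine ⟨{w | w ∈ p.support}, fun w hw => ?_, p.end_mem_support, p.start_mem_support,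
    p.connected_induce_support.preconnected _ _⟩
  have hsplit := congrArg Walk.length (p.take_spec hw)
  rw [Walk.length_append] at hsplit
  have hto := dist_le (p.takeUntil w hw)
  have hfrom := dist_le (p.dropUntil w hw)
  have htri := hT.dist_triangle (u := v) (v := w) (w := d.fst)
  simp only [side, Set.mem_ofPred_eq] at hv ⊢
  omega

lemma exists_dart_mem_side (hT : T.Connected) {x : V} (hv : v ≠ x) :
    ∃ d : T.Dart, d.fst = x ∧ v ∈ side d := by
  obtain ⟨p, hp⟩ := hT.exists_walk_length_eq_dist x v
  cases p with
  | nil => exact absurd rfl hv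
  | @cons _ w _ hadj q =>
    refine ⟨⟨(x, w), hadj⟩, rfl, ?_⟩
    have := dist_le q
    rw [Walk.length_cons] at hp
    simp only [side, Set.mem_ofPred_eq, dist_comm (u := v)]
    omega

lemma dart_eq_of_mem_side (hT : T.IsTree) (hfst : d.fst = d'.fst) (hd : v ∈ side d)
    (hd' : v ∈ side d') : d = d' := by
  have hpath : ∀ e : T.Dart, v ∈ side e → ∃ q : T.Walk e.snd v, (q.cons e.adj).IsPath := by
    intro e he
    obtain ⟨q, hq⟩ := hT.connected.exists_walk_length_eq_dist e.snd v
    refine ⟨q, Walk.isPath_of_length_eq_dist _ ?_⟩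
    have := hT.dist_eq_dist_add_one_of_adj v e.adj
    simp only [side, Set.mem_ofPred_eq, dist_comm (u := v)] at he this
    rw [Walk.length_cons]
    omega
  obtain ⟨⟨x, w⟩, h⟩ := d
  obtain ⟨⟨x', w'⟩, h'⟩ := d'
  obtain rfl : x = x' := hfst
  obtain ⟨q, hq⟩ := hpath _ hd
  obtain ⟨q', hq'⟩ := hpath _ hd'
  obtain rfl : w = w' := by
    simpa using congrArg (fun p => p.1.snd) ((hT.isAcyclic.subsingleton_path x v).elim
      ⟨_, hq⟩ ⟨_, hq'⟩)
  rfl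

lemma mem_side_iff (hT : T.IsTree) :
    v ∈ side d ↔ v = d.snd ∨ ∃ e : T.Dart, e.fst = d.snd ∧ e ≠ d.symm ∧ v ∈ side e := by
  constructor
  · intro hv
    refine or_iff_not_imp_left.2 fun hne => ?_
    obtain ⟨e, he, hve⟩ := exists_dart_mem_side hT.connected hne
    refine ⟨e, he, ?_, hve⟩
    rintro rfl
    rw [side_symm hT] at hve
    exact hve hv
  · rintro (rfl | ⟨e, he, hne, hve⟩)
    · exact snd_mem_side d
    · by_contra hv
      rw [← Set.mem_compl_iff, ← side_symm hT] at hv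
      exact hne (dart_eq_of_mem_side hT he hve hv)

lemma side_eq_singleton (hT : T.IsTree) (hd : d.snd ∈ leaves T) : side d = {d.snd} := by
  ext v
  rw [mem_side_iff hT, Set.mem_singleton_iff, or_iff_left]
  rintro ⟨e, he, hne, -⟩
  obtain ⟨w, hw⟩ := Set.ncard_eq_one.1 hd
  have hfst : d.fst ∈ T.neighborSet d.snd := d.adj.symm
  have hsnd : e.snd ∈ T.neighborSet d.snd := he ▸ e.adj
  rw [hw] at hfst hsnd
  exact hne (Dart.ext _ _ (Prod.ext he (hsnd.trans hfst.symm)))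

end Side

section Thread

variable {T : SimpleGraph V} {d e f : T.Dart} {m n : ℕ} {v : V}

/-- The dart `e` is the only continuation of `d`: its start `d.snd` has degree two. -/
def Continues (d e : T.Dart) : Prop :=
  e.fst = d.snd ∧ e ≠ d.symm ∧ valency T d.snd = 2

/-- `Thread n d e` says that `n` steps through vertices of degree two lead from `d` to `e`. -/
inductive Thread : ℕ → T.Dart → T.Dart → Prop
  | refl (d : T.Dart) : Thread 0 d d
  | tail {n : ℕ} {d e f : T.Dart} : Thread n d e → Continues e f → Thread (n + 1) d f

lemma Continues.symm (h : Continues d e) : Continues e.symm d.symm :=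
  ⟨h.1.symm, fun he => h.2.1 (by rw [he, Dart.symm_symm]), (congrArg _ h.1).trans h.2.2⟩

lemma Continues.right_unique (he : Continues d e) (hf : Continues d f) : e = f := by
  obtain ⟨a, b, -, hab⟩ := Set.ncard_eq_two.1 he.2.2
  have hnbr : ∀ w, T.Adj d.snd w → w = a ∨ w = b := fun w hw => by
    have : w ∈ T.neighborSet d.snd := hw
    simpa [hab] using this
  have hne : ∀ {g : T.Dart}, Continues d g → g.snd ≠ d.fst := fun hg h =>
    hg.2.1 (Dart.ext _ _ (Prod.ext hg.1 h))
  have := hnbr _ d.adj.symm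
  have := hnbr _ (he.1 ▸ e.adj)
  have := hnbr _ (hf.1 ▸ f.adj)
  have := hne he
  have := hne hf
  exact Dart.ext _ _ (Prod.ext (he.1.trans hf.1.symm) (by grind))

lemma Continues.left_unique (hd : Continues d f) (he : Continues e f) : d = e :=
  Dart.symm_involutive.injective (hd.symm.right_unique he.symm)

lemma exists_continues (hd : valency T d.snd = 2) : ∃ e, Continues d e := by
  obtain ⟨w, hw, hne⟩ := Set.exists_ne_of_one_lt_ncard (hd ▸ one_lt_two) d.fst
  exact ⟨⟨(d.snd, w), hw⟩, rfl, fun h => hne (congrArg (fun g : T.Dart => g.snd) h), hd⟩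

lemma Continues.side_eq (hT : T.IsTree) (h : Continues d e) : side d = insert d.snd (side e) := by
  ext v
  rw [mem_side_iff hT, Set.mem_insert_iff]
  refine or_congr_right ⟨?_, fun hv => ⟨e, h.1, h.2.1, hv⟩⟩
  rintro ⟨f, hfst, hne, hv⟩
  rwa [h.right_unique ⟨hfst, hne, h.2.2⟩]

lemma Thread.trans (hde : Thread m d e) (hef : Thread n e f) : Thread (m + n) d f := by
  induction hef with
  | refl => exact hde
  | tail _ hcont ih => exact (ih hde).tail hcont

lemma Thread.symm (h : Thread n d e) : Thread n e.symm d.symm := by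
  induction h with
  | refl => exact .refl _
  | tail _ hcont ih => exact Nat.add_comm _ 1 ▸ ((Thread.refl _).tail hcont.symm).trans ih

lemma Thread.of_add (hdf : Thread (m + n) d f) (hef : Thread n e f) : Thread m d e := by
  induction hef with
  | refl => exact hdf
  | tail _ hcont ih =>
    obtain _ | ⟨hdg, hcont'⟩ := hdf
    exact ih (hcont'.left_unique hcont ▸ hdg)

lemma Thread.side_subset (hT : T.IsTree) (h : Thread n d e) : side e ⊆ side d := by
  induction h with
  | refl => exact subset_rfl
  | tail _ hcont ih => exact (hcont.side_eq hT ▸ Set.subset_insert _ _).trans ih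

lemma Thread.mem_side (hT : T.IsTree) (h : Thread n d e) (hv : v ∈ leaves T) (hd : v ∈ side d) :
    v ∈ side e := by
  induction h with
  | refl => exact hd
  | tail _ hcont ih =>
    have := ih hd
    rw [hcont.side_eq hT] at this
    refine this.resolve_left ?_
    rintro rfl
    exact absurd (hv.symm.trans hcont.2.2) (by decide)

lemma Thread.ncard_side [Finite V] (hT : T.IsTree) (h : Thread n d e) :
    (side d).ncard = (side e).ncard + n := by
  induction h with
  | refl => rfl
  | tail _ hcont ih =>
    have hne : _ ∉ side _ := hcont.1 ▸ fst_notMem_side _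
    rw [ih, hcont.side_eq hT, Set.ncard_insert_of_notMem hne (Set.toFinite _)]
    omega

end Thread

section Reroute

variable {G T : SimpleGraph V} {d e : T.Dart} {n : ℕ} {u v w : V}

/-- The graph obtained from a tree by cutting out the thread from `d` to `e` and attaching its
start `d.fst` to `v` instead. -/
def reroute (d e : T.Dart) (v : V) : SimpleGraph V :=
  T.deleteEdges {d.edge, e.edge} ⊔ edge d.fst v

lemma reroute_le (hTG : T ≤ G) (hadj : G.Adj d.fst v) : reroute d e v ≤ G :=
  sup_edge_le ((T.deleteEdges_le _).trans hTG) hadj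

lemma valency_reroute_le [Finite V] (hw : w ≠ v) : valency (reroute d e v) w ≤ valency T w := by
  by_cases hd : w = d.fst
  · subst hd
    have hlt : valency (T.deleteEdges {d.edge, e.edge}) d.fst < valency T d.fst :=
      valency_deleteEdges_lt d.adj (Or.inl rfl)
    exact (valency_sup_edge_le _ _ _ _).trans hlt
  · exact (valency_sup_edge_of_ne _ hd hw).trans_le (valency_mono (T.deleteEdges_le _) w)

lemma valency_reroute_self_le [Finite V] : valency (reroute d e v) v ≤ valency T v + 1 :=
  (valency_sup_edge_le _ _ _ _).trans
    (Nat.add_le_add_right (valency_mono (T.deleteEdges_le _) v) 1)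

lemma valency_reroute_snd_lt [Finite V] (hd : e.snd ≠ d.fst) (hv : e.snd ≠ v) :
    valency (reroute d e v) e.snd < valency T e.snd :=
  (valency_sup_edge_of_ne _ hd hv).trans_lt
    (valency_deleteEdges_lt e.adj.symm (Or.inr Sym2.eq_swap))

lemma excess_reroute_sup_edge_le [Finite V] (hv : valency T v = 1) (hu : valency T u = 1)
    (huv : u ≠ v) (hd : e.snd ≠ d.fst) (hev : e.snd ≠ v) :
    excess (reroute d e v ⊔ edge e.snd u) ≤ excess T := by
  refine excess_le_excess fun w => ?_
  have hadd := valency_sup_edge_le (reroute d e v) e.snd u w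
  by_cases hwe : w = e.snd
  · subst hwe
    exact le_max_of_le_right (hadd.trans (valency_reroute_snd_lt hd hev))
  by_cases hwu : w = u
  · subst hwu
    have := valency_reroute_le (d := d) (e := e) huv
    omega
  rw [valency_sup_edge_of_ne _ hwe hwu]
  by_cases hwv : w = v
  · subst hwv
    exact le_max_of_le_left (valency_reroute_self_le.trans_eq (by rw [hv]))
  · exact le_max_of_le_right (valency_reroute_le hwv)

lemma connected_induce_reroute (hT : T.IsTree) (h : Thread n d e) (hv : v ∈ side e) :
    ((reroute d e v).induce (side d.symm ∪ side e)).Connected := by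
  have hside := h.side_subset hT
  have hkeep : ∀ S : Set V, (T.induce S).Connected → S ⊆ (side d)ᶜ ∨ S ⊆ side e →
      ((reroute d e v).induce S).Connected := by
    intro S hS hsub
    refine hS.mono fun a b hab => Or.inl (deleteEdges_adj.2 ⟨hab, ?_⟩)
    have hd : a.1 ∈ side d ↔ b.1 ∈ side d := by grind
    have he : a.1 ∈ side e ↔ b.1 ∈ side e := by grind
    simp [mk_ne_edge hd, mk_ne_edge he]
  have hne : d.fst ≠ v := fun h => fst_notMem_side d (h ▸ hside hv)
  exact connected_induce_union
    (hkeep _ (connected_induce_side hT.connected d.symm)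
      (Or.inl (side_symm hT d).subset)).preconnected
    (hkeep _ (connected_induce_side hT.connected e) (Or.inr subset_rfl)).preconnected
    (snd_mem_side d.symm) hv (sup_edge_adj _ hne)

lemma ncard_side_symm_union_side_add [Finite V] (hT : T.IsTree) (h : Thread n d e) :
    (side d.symm ∪ side e).ncard + n = Nat.card V := by
  have hdisj : Disjoint (side d.symm) (side e) := by
    rw [side_symm hT]
    exact Set.disjoint_compl_left_iff_subset.2 (h.side_subset hT)
  rw [Set.ncard_union_eq hdisj, add_assoc, ← h.ncard_side hT, side_symm hT, add_comm,
    Set.ncard_add_ncard_compl]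

end Reroute

section Critical

variable {G T : SimpleGraph V} {k : ℕ}

/-- A spanning tree `T` of `G` with `k + 1` leaves in a graph whose `k`-ended trees all miss at
least `k` vertices: a largest `(k + 1)`-ended tree in a counterexample. -/
structure IsCritical (G T : SimpleGraph V) (k : ℕ) : Prop where
  isTree : T.IsTree
  le : T ≤ G
  ncard_leaves : (leaves T).ncard = k + 1
  add_le_card : maxKEndedOrder G k + k ≤ Nat.card V

namespace IsCritical

lemma nontrivial (hc : IsCritical G T k) : Nontrivial V := by
  obtain ⟨v, hv⟩ := Set.nonempty_of_ncard_ne_zero (hc.ncard_leaves.trans_ne k.succ_ne_zero)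
  obtain ⟨w, hw⟩ := Set.nonempty_of_ncard_ne_zero (ne_of_eq_of_ne hv one_ne_zero)
  exact ⟨v, w, T.ne_of_adj hw⟩

lemma excess_add_one [Finite V] (hc : IsCritical G T k) : excess T + 1 = k := by
  have := hc.nontrivial
  have := ncard_leaves_eq_excess_add_two hc.isTree
  have := hc.ncard_leaves
  omega

lemma two_lt_card [Finite V] (hc : IsCritical G T k) : 2 < Nat.card V := by
  have hk := hc.excess_add_one
  by_contra hcard
  have := (card_le_maxKEndedOrder_of_isCycle hc.isTree.connected (k := k) (Or.inl (by omega))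
    (by omega)).trans (maxKEndedOrder_le_of_copy (Copy.ofLE T G hc.le) k)
  have := hc.add_le_card
  omega

lemma not_adj_of_mem_leaves [Finite V] (hc : IsCritical G T k) {u v : V} (hu : u ∈ leaves T)
    (hv : v ∈ leaves T) : ¬ T.Adj u v := by
  intro h
  let d : T.Dart := ⟨(u, v), h⟩
  have hcompl := side_symm hc.isTree d
  rw [side_eq_singleton hc.isTree (d := d) hv, side_eq_singleton hc.isTree (d := d.symm) hu]
    at hcompl
  have := Set.ncard_add_ncard_compl {d.snd}
  rw [← hcompl, Set.ncard_singleton, Set.ncard_singleton] at this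
  have := hc.two_lt_card
  omega

lemma isIndSet_leaves [Finite V] (hc : IsCritical G T k) : IsIndSet G (leaves T) := by
  intro u hu v hv huv
  have hspan : (T.induce Set.univ).Connected :=
    (induceUnivIso T).connected_iff.2 hc.isTree.connected
  have hexcess : excess (T ⊔ edge u v) ≤ excess T := excess_le_excess fun w => by
    have hle := valency_sup_edge_le T u v w
    by_cases hw : w = u ∨ w = v
    · have hleaf : valency T w = 1 := by rcases hw with rfl | rfl <;> assumption
      omega
    · rw [not_or] at hw
      exact le_max_of_le_right (valency_sup_edge_of_ne T hw.1 hw.2).le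
  have := ncard_le_maxKEndedOrder_of_connected_induce_of_adj
    (sup_edge_le hc.le huv) le_sup_left hspan (k := k)
    (Set.mem_univ u) (Set.mem_univ v) (sup_edge_adj _ huv.ne)
    (hc.not_adj_of_mem_leaves hu hv) (by have := hc.excess_add_one; omega)
  rw [Set.ncard_univ] at this
  have := hc.excess_add_one
  have := hc.add_le_card
  omega

variable {d e : T.Dart} {n : ℕ} {u v : V}

lemma valency_snd_le_two [Finite V] (hc : IsCritical G T k) (h : Thread n d e) (hn : n < k)
    (hv : v ∈ leaves T) (hvd : v ∈ side d) (hadj : G.Adj d.fst v) : valency T e.snd ≤ 2 := by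
  by_contra! hbranch
  have hve := h.mem_side hc.isTree hv hvd
  have hv1 : valency T v = 1 := hv
  have hsnd_ne_fst : e.snd ≠ d.fst := fun heq =>
    fst_notMem_side d (heq ▸ h.side_subset hc.isTree (snd_mem_side e))
  have hsnd_ne : e.snd ≠ v := fun heq => by rw [heq] at hbranch; omega
  have hexcess : excess (reroute d e v) < excess T := by
    refine excess_lt_excess (fun w => ?_) (valency_reroute_snd_lt hsnd_ne_fst hsnd_ne) hbranch
    by_cases hw : w = v
    · rw [hw]
      exact le_max_of_le_left (valency_reroute_self_le.trans_eq (by rw [hv1]))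
    · exact le_max_of_le_right (valency_reroute_le hw)
  have := ncard_le_maxKEndedOrder_of_connected_induce (k := k) (reroute_le hc.le hadj)
    (connected_induce_reroute hc.isTree h hve) (by have := hc.excess_add_one; omega)
  have := ncard_side_symm_union_side_add hc.isTree h
  have := hc.add_le_card
  omega

lemma fst_notMem_leaves [Finite V] (hc : IsCritical G T k) (hv : v ∈ leaves T)
    (hadj : G.Adj d.fst v) : d.fst ∉ leaves T :=
  fun hd => hc.isIndSet_leaves hd hv hadj

lemma exists_continues_of_adj [Finite V] (hc : IsCritical G T k) (h : Thread n d e) (hn : n < k)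
    (hv : v ∈ leaves T) (hvd : v ∈ side d) (hadj : G.Adj d.fst v) (he : e.snd ∉ leaves T) :
    ∃ f, Continues e f := by
  have := hc.nontrivial
  have hpos := valency_pos hc.isTree.connected e.snd
  have hle := hc.valency_snd_le_two h hn hv hvd hadj
  have hne : valency T e.snd ≠ 1 := he
  exact exists_continues (by omega)

lemma not_tree_adj_snd [Finite V] (hc : IsCritical G T k) (h : Thread n d e) (hn : n < k)
    (hv : v ∈ leaves T) (hvd : v ∈ side d) (hadj : G.Adj d.fst v) (hu : u ∈ leaves T)
    (huv : u ≠ v) : ¬ T.Adj e.snd u := by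
  intro hTadj
  have hsnd : e.snd ∉ leaves T := fun hs => hc.not_adj_of_mem_leaves hs hu hTadj
  have hue : u ≠ e.fst := by
    have hfst := hc.fst_notMem_leaves hv hadj
    rintro rfl
    cases h with
    | refl => exact hfst hu
    | tail _ hcont =>
      rw [hcont.1] at hu
      exact absurd (hu.symm.trans hcont.2.2) (by decide)
  obtain ⟨f, hf⟩ := hc.exists_continues_of_adj h hn hv hvd hadj hsnd
  obtain rfl : f = ⟨(e.snd, u), hTadj⟩ := hf.right_unique
    ⟨rfl, fun heq => hue (congrArg (fun g : T.Dart => g.snd) heq), hf.2.2⟩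
  have hmem := (h.tail hf).mem_side hc.isTree hv hvd
  rw [side_eq_singleton hc.isTree hu] at hmem
  exact huv hmem.symm

lemma not_adj_snd [Finite V] (hc : IsCritical G T k) (h : Thread n d e) (hn : n < k)
    (hv : v ∈ leaves T) (hvd : v ∈ side d) (hadj : G.Adj d.fst v) (hu : u ∈ leaves T)
    (huv : u ≠ v) : ¬ G.Adj e.snd u := by
  intro hcross
  have hve := h.mem_side hc.isTree hv hvd
  have hfst := hc.fst_notMem_leaves hv hadj
  have hsnd : e.snd ∉ leaves T := fun hs => hc.isIndSet_leaves hs hu hcross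
  have hsnd_ne_fst : e.snd ≠ d.fst := fun heq =>
    fst_notMem_side d (heq ▸ h.side_subset hc.isTree (snd_mem_side e))
  have hnew : ¬ (reroute d e v).Adj e.snd u := by
    rintro (hdel | hxv)
    · exact hc.not_tree_adj_snd h hn hv hvd hadj hu huv (T.deleteEdges_le _ hdel)
    · grind
  have hexcess : excess (reroute d e v ⊔ edge e.snd u) ≤ excess T :=
    excess_reroute_sup_edge_le hv hu huv hsnd_ne_fst fun heq => hsnd (heq ▸ hv)
  have humem : u ∈ side d.symm ∪ side e := by
    rw [side_symm hc.isTree]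
    exact (em (u ∈ side d)).symm.imp id (h.mem_side hc.isTree hu)
  have := ncard_le_maxKEndedOrder_of_connected_induce_of_adj (k := k)
    (sup_edge_le (reroute_le hc.le hadj) hcross) le_sup_left
    (connected_induce_reroute hc.isTree h hve) (Or.inr (snd_mem_side e)) humem
    (sup_edge_adj _ hcross.ne) hnew
    (by have := hc.excess_add_one; omega)
  have := ncard_side_symm_union_side_add hc.isTree h
  have := hc.add_le_card
  omega

end IsCritical

end Critical

section Charging

variable {G T : SimpleGraph V} {d d' e f : T.Dart} {k m n : ℕ}

/-- The leaves of `T` beyond the dart `d` that are adjacent in `G` to the start of `d`. -/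
def farLeaves (G : SimpleGraph V) (d : T.Dart) : Set V :=
  {v | v ∈ leaves T ∧ v ∈ side d ∧ G.Adj d.fst v}

/-- The edges charged to a dart `d`: those of the thread starting at `d`, one for each of the far
leaves of `d`. -/
def charged (G : SimpleGraph V) (d : T.Dart) : Set (Sym2 V) :=
  {ε | ∃ n < (farLeaves G d).ncard, ∃ e, Thread n d e ∧ e.edge = ε}

lemma Thread.eq_of_edge_eq [Finite V] (hT : T.IsTree) (he : Thread m d e) (hf : Thread n d f)
    (hedge : e.edge = f.edge) : m = n := by
  obtain rfl | rfl := (dart_edge_eq_iff _ _).1 hedge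
  · have := he.ncard_side hT
    have := hf.ncard_side hT
    omega
  · have hmem : d.fst ∈ side f.symm := by
      rw [side_symm hT]
      exact fun h => fst_notMem_side d (hf.side_subset hT h)
    exact absurd (he.side_subset hT hmem) (fst_notMem_side d)

namespace IsCritical

variable [Finite V]

lemma ncard_farLeaves_le (hc : IsCritical G T k) (d : T.Dart) :
    (farLeaves G d).ncard ≤ k + 1 :=
  hc.ncard_leaves ▸ Set.ncard_le_ncard (fun _ hv => hv.1) (Set.toFinite _)

lemma exists_thread (hc : IsCritical G T k) (hn : n < (farLeaves G d).ncard) :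
    ∃ e, Thread n d e := by
  induction n with
  | zero => exact ⟨d, .refl d⟩
  | succ n ih =>
    obtain ⟨e, he⟩ := ih (by omega)
    have := hc.ncard_farLeaves_le d
    obtain ⟨v, hv, hvd, hadj⟩ := Set.nonempty_of_ncard_ne_zero (s := farLeaves G d) (by omega)
    have hsnd : e.snd ∉ leaves T := by
      intro hleaf
      have hsub : farLeaves G d ⊆ {e.snd} := fun u hu =>
        side_eq_singleton hc.isTree hleaf ▸ he.mem_side hc.isTree hu.1 hu.2.1
      have := Set.ncard_le_ncard hsub
      rw [Set.ncard_singleton] at this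
      omega
    obtain ⟨f, hf⟩ := hc.exists_continues_of_adj he (by omega) hv hvd hadj hsnd
    exact ⟨f, he.tail hf⟩

lemma ncard_farLeaves_le_ncard_charged (hc : IsCritical G T k) (d : T.Dart) :
    (farLeaves G d).ncard ≤ (charged G d).ncard := by
  choose e he using fun i : Fin (farLeaves G d).ncard => hc.exists_thread i.2
  have hinj : Function.Injective fun i => (e i).edge := fun i j hij =>
    Fin.ext ((he i).eq_of_edge_eq hc.isTree (he j) hij)
  calc (farLeaves G d).ncard
      = (Set.range fun i => (e i).edge).ncard := by
        rw [← Set.image_univ, Set.ncard_image_of_injective _ hinj, Set.ncard_univ, Nat.card_fin]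
    _ ≤ (charged G d).ncard := Set.ncard_le_ncard (Set.range_subset_iff.2 fun i =>
        ⟨i, i.2, e i, he i, rfl⟩) (Set.toFinite _)

lemma farLeaves_eq_empty_of_thread (hc : IsCritical G T k) (h : Thread (n + 1) d d')
    (hn : n + 1 < (farLeaves G d).ncard) : farLeaves G d' = ∅ := by
  refine Set.eq_empty_of_forall_notMem fun u hu => ?_
  obtain ⟨v, ⟨hv, hvd, hadj⟩, hvu⟩ := Set.exists_ne_of_one_lt_ncard (s := farLeaves G d)
    (by omega) u
  have := hc.ncard_farLeaves_le d
  obtain _ | ⟨hde, hcont⟩ := h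
  exact hc.not_adj_snd hde (by omega) hv hvd hadj hu.1 hvu.symm (hcont.1 ▸ hu.2.2)

lemma eq_of_thread_of_thread (hc : IsCritical G T k) (hm : m < (farLeaves G d).ncard)
    (hn : n < (farLeaves G d').ncard) (hd : Thread m d f) (hd' : Thread n d' f) : d = d' := by
  wlog hmn : m ≤ n generalizing d d' m n
  · exact (this hn hm hd' hd (by omega)).symm
  obtain ⟨i, rfl⟩ := Nat.exists_eq_add_of_le' hmn
  have h := hd'.of_add hd
  cases i with
  | zero =>
    cases h
    rfl
  | succ i =>
    have := hc.farLeaves_eq_empty_of_thread h (by omega)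
    simp [this] at hm

lemma false_of_thread_of_thread_symm (hc : IsCritical G T k) (hm : m < (farLeaves G d).ncard)
    (hn : n < (farLeaves G d').ncard) (hd : Thread m d f) (hd' : Thread n d' f.symm) : False := by
  have hthread : Thread (m + n) d d'.symm := by
    simpa using hd.trans (by simpa using hd'.symm)
  have hdisj : Disjoint (farLeaves G d) (farLeaves G d') := by
    refine Set.disjoint_left.2 fun v hv hv' => ?_
    have := hthread.mem_side hc.isTree hv.1 hv.2.1
    rw [side_symm hc.isTree] at this
    exact this hv'.2.1
  have hsum : (farLeaves G d).ncard + (farLeaves G d').ncard ≤ k + 1 := by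
    rw [← Set.ncard_union_eq hdisj, ← hc.ncard_leaves]
    exact Set.ncard_le_ncard (Set.union_subset (fun _ h => h.1) fun _ h => h.1) (Set.toFinite _)
  obtain ⟨v, hv⟩ := Set.nonempty_of_ncard_ne_zero (s := farLeaves G d) (by omega)
  obtain ⟨u, hu⟩ := Set.nonempty_of_ncard_ne_zero (s := farLeaves G d') (by omega)
  exact hc.not_adj_snd hthread (by omega) hv.1 hv.2.1 hv.2.2 hu.1
    (hdisj.ne_of_mem hv hu).symm hu.2.2

lemma pairwise_disjoint_charged (hc : IsCritical G T k) :
    Pairwise fun d d' : T.Dart => Disjoint (charged G d) (charged G d') := by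
  refine fun d d' hne => Set.disjoint_left.2 ?_
  rintro _ ⟨m, hm, f, hd, rfl⟩ ⟨n, hn, f', hd', hedge⟩
  obtain rfl | rfl := (dart_edge_eq_iff _ _).1 hedge
  · exact hne (hc.eq_of_thread_of_thread hm hn hd hd')
  · exact hc.false_of_thread_of_thread_symm hm hn hd hd'

lemma sum_ncard_farLeaves_lt [Fintype T.Dart] (hc : IsCritical G T k) :
    ∑ d : T.Dart, (farLeaves G d).ncard < Nat.card V := by
  classical
  have := Fintype.ofFinite V
  have hedges : T.edgeSet.ncard + 1 = Nat.card V := by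
    rw [Nat.card_eq_fintype_card, ← hc.isTree.card_edgeFinset, edgeFinset,
      Set.ncard_eq_toFinset_card']
  have hsub : ⋃ d : T.Dart, charged G d ⊆ T.edgeSet := by
    refine Set.iUnion_subset fun d => ?_
    rintro _ ⟨_, _, e, -, rfl⟩
    exact e.edge_mem
  calc ∑ d : T.Dart, (farLeaves G d).ncard
      ≤ ∑ d : T.Dart, (charged G d).ncard :=
        Finset.sum_le_sum fun d _ => hc.ncard_farLeaves_le_ncard_charged d
    _ = (⋃ d : T.Dart, charged G d).ncard := by
        rw [Set.ncard_iUnion_of_finite (fun _ => Set.toFinite _) hc.pairwise_disjoint_charged,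
          finsum_eq_sum_of_fintype]
    _ ≤ T.edgeSet.ncard := Set.ncard_le_ncard hsub
    _ < Nat.card V := by omega

end IsCritical

lemma valency_le_ncard_dart [Finite T.Dart] (hT : T.Connected) {u : V} (hu : u ∈ leaves T) :
    valency G u ≤ {d : T.Dart | u ∈ farLeaves G d}.ncard := by
  have hsub : G.neighborSet u ⊆ (fun d : T.Dart => d.fst) '' {d | u ∈ farLeaves G d} := by
    intro x hx
    obtain ⟨d, rfl, hd⟩ := exists_dart_mem_side hT (G.ne_of_adj hx)
    exact ⟨d, ⟨hu, hd, hx.symm⟩, rfl⟩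
  exact (Set.ncard_le_ncard hsub).trans Set.ncard_image_le

lemma IsCritical.sum_valency_lt [Finite V] (hc : IsCritical G T k) {L : Finset V}
    (hL : (L : Set V) = leaves T) : ∑ u ∈ L, valency G u < Nat.card V := by
  classical
  have := Fintype.ofFinite V
  have habove : ∀ u ∈ L, valency G u ≤
      (Finset.univ.bipartiteAbove (fun v (d : T.Dart) => v ∈ farLeaves G d) u).card := by
    intro u hu
    have hleaf : u ∈ leaves T := hL ▸ hu
    refine (valency_le_ncard_dart hc.isTree.connected hleaf).trans_eq ?_
    rw [Set.ncard_eq_toFinset_card', Set.toFinset_ofPred, Finset.bipartiteAbove]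
  have hbelow : ∀ d : T.Dart,
      (L.bipartiteBelow (fun v (d : T.Dart) => v ∈ farLeaves G d) d).card =
        (farLeaves G d).ncard := by
    intro d
    rw [← Set.ncard_coe_finset, Finset.coe_bipartiteBelow]
    congr 1
    ext v
    exact ⟨fun h => h.2, fun h => ⟨Finset.mem_coe.1 (hL.symm ▸ h.1), h⟩⟩
  calc ∑ u ∈ L, valency G u
      ≤ ∑ u ∈ L, (Finset.univ.bipartiteAbove (fun v (d : T.Dart) => v ∈ farLeaves G d) u).card :=
        Finset.sum_le_sum habove
    _ = ∑ d : T.Dart, (L.bipartiteBelow (fun v (d : T.Dart) => v ∈ farLeaves G d) d).card :=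
        Finset.sum_card_bipartiteAbove_eq_sum_card_bipartiteBelow _
    _ = ∑ d : T.Dart, (farLeaves G d).ncard := Finset.sum_congr rfl fun d _ => hbelow d
    _ < Nat.card V := hc.sum_ncard_farLeaves_lt

end Charging

section Largest

variable {G : SimpleGraph V} {H : G.Subgraph} {k : ℕ}

lemma exists_ncard_verts_eq_maxKEndedOrder [Finite V] (h : 0 < maxKEndedOrder G k) :
    ∃ H : G.Subgraph, IsKEndedTree G k H ∧ H.verts.ncard = maxKEndedOrder G k := by
  refine Nat.sSup_mem ?_ (bddAbove_ncard_isKEndedTree G k)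
  by_contra hempty
  rw [Set.not_nonempty_iff_eq_empty] at hempty
  simp [maxKEndedOrder, hempty] at h

lemma valency_induce {S : Set V} {v : S} (h : G.neighborSet v ⊆ S) :
    valency (G.induce S) v = valency G v := by
  have himage : Subtype.val '' (G.induce S).neighborSet v = G.neighborSet v :=
    Subtype.coe_image_of_subset h
  rw [valency, valency, ← himage, Set.ncard_image_of_injective _ Subtype.val_injective]

lemma valency_coe (v : H.verts) : valency H.coe v = valency H.spanningCoe v :=
  valency_induce (G := H.spanningCoe) (H.neighborSet_subset_verts v)

lemma ncard_leaves_coe : (leaves H.coe).ncard = endVertexCount H := by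
  rw [← Set.ncard_image_of_injective _ Subtype.val_injective, endVertexCount]
  congr 1
  ext v
  constructor
  · rintro ⟨v, hv, rfl⟩
    exact ⟨v.2, (valency_coe v).symm.trans hv⟩
  · rintro ⟨hv, hleaf⟩
    exact ⟨⟨v, hv⟩, (valency_coe ⟨v, hv⟩).trans hleaf, rfl⟩

lemma neighborSet_spanningCoe_eq_empty {v : V} (hv : v ∉ H.verts) :
    H.spanningCoe.neighborSet v = ∅ :=
  Set.eq_empty_of_forall_notMem fun _ h => hv (H.edge_vert h)

lemma excess_spanningCoe : excess H.spanningCoe = excess H.coe := by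
  have hsupp : Function.support (fun v => valency H.spanningCoe v - 2) ⊆ H.verts := by
    refine Function.support_subset_iff'.2 fun v hv => ?_
    rw [valency, neighborSet_spanningCoe_eq_empty hv, Set.ncard_empty, Nat.zero_sub]
  simp only [excess, valency_coe]
  rw [finsum_set_coe_eq_finsum_mem (f := fun v => valency H.spanningCoe v - 2) H.verts,
    ← finsum_mem_univ]
  exact finsum_mem_inter_support_eq' _ _ _ fun v hv => ⟨fun _ => hsupp hv, fun _ => trivial⟩

lemma ncard_verts_lt_maxKEndedOrder_of_adj [Finite V] (hH : H.Connected) {u : H.verts}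
    (hu : u ∈ leaves H.coe) {w : V} (hw : w ∉ H.verts) (huw : G.Adj u w)
    (hk : excess H.coe + 2 ≤ k) : H.verts.ncard < maxKEndedOrder G k := by
  have hconn : ((H.spanningCoe ⊔ edge ↑u w).induce (H.verts ∪ {w})).Connected := by
    refine connected_induce_union (hH.coe.preconnected.mono fun _ _ h => Or.inl h)
      Preconnected.of_subsingleton u.2 rfl ?_
    exact sup_edge_adj _ huw.ne
  have hexcess : excess (H.spanningCoe ⊔ edge ↑u w) ≤ excess H.spanningCoe :=
    excess_le_excess fun v => by
      have hle := valency_sup_edge_le H.spanningCoe u w v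
      have huv : valency H.spanningCoe u = 1 := (valency_coe u).symm.trans hu
      have hwv : valency H.spanningCoe w = 0 := by
        rw [valency, neighborSet_spanningCoe_eq_empty hw, Set.ncard_empty]
      by_cases hv : v = u ∨ v = w
      · have : valency H.spanningCoe v ≤ 1 := by rcases hv with rfl | rfl <;> omega
        omega
      · rw [not_or] at hv
        exact le_max_of_le_right (valency_sup_edge_of_ne _ hv.1 hv.2).le
  have := ncard_le_maxKEndedOrder_of_connected_induce (k := k)
    (sup_edge_le H.spanningCoe_le huw) hconn
    (by rw [excess_spanningCoe] at hexcess; omega)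
  rwa [Set.union_singleton, Set.ncard_insert_of_notMem hw] at this

lemma isCritical_coe [Finite V] (hk : 1 ≤ k) (hH : IsKEndedTree G (k + 1) H)
    (hcard : maxKEndedOrder G k + k ≤ H.verts.ncard) :
    IsCritical (G.induce H.verts) H.coe k := by
  have hnot : ¬ IsKEndedTree G k H := fun h => by
    have := ncard_verts_le_maxKEndedOrder h
    omega
  obtain ⟨hT, hends⟩ := hH.resolve_right fun h => hnot (Or.inr ⟨hk, h.2⟩)
  exact
    { isTree := hT
      le := fun _ _ h => H.adj_sub h
      ncard_leaves := ncard_leaves_coe.trans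
        (hends.antisymm (Nat.lt_of_not_le fun h => hnot (Or.inl ⟨hT, h⟩)))
      add_le_card := (Nat.add_le_add_right
        (maxKEndedOrder_le_of_copy (Embedding.induce H.verts).toCopy k) k).trans hcard }

lemma valency_induce_of_mem_leaves [Finite V] (hc : IsCritical (G.induce H.verts) H.coe k)
    (hcard : H.verts.ncard = maxKEndedOrder G (k + 1)) {u : H.verts} (hu : u ∈ leaves H.coe) :
    valency (G.induce H.verts) u = valency G u := by
  refine valency_induce fun w huw => ?_
  by_contra hw
  have := ncard_verts_lt_maxKEndedOrder_of_adj (k := k + 1) ⟨hc.isTree.connected⟩ hu hw huw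
    (by have := hc.excess_add_one; omega)
  omega

lemma exists_isIndSet_sum_degree_lt [Fintype V] [DecidableRel G.Adj] (hk : 1 ≤ k)
    (h : maxKEndedOrder G k + k ≤ maxKEndedOrder G (k + 1)) :
    ∃ s : Finset V, s.card = k + 1 ∧ IsIndSet G ↑s ∧
      ∑ v ∈ s, G.degree v < maxKEndedOrder G (k + 1) := by
  classical
  obtain ⟨H, hH, hcard⟩ := exists_ncard_verts_eq_maxKEndedOrder (G := G) (k := k + 1) (by omega)
  have hc := isCritical_coe hk hH (by omega)
  have hL : ((leaves H.coe).toFinset : Set H.verts) = leaves H.coe := Set.coe_toFinset _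
  refine ⟨(leaves H.coe).toFinset.map (.subtype _), ?_, ?_, ?_⟩
  · rw [Finset.card_map, ← hc.ncard_leaves, Set.ncard_eq_toFinset_card']
  · rw [Finset.coe_map, hL]
    rintro _ ⟨u, hu, rfl⟩ _ ⟨v, hv, rfl⟩
    exact hc.isIndSet_leaves hu hv
  · calc ∑ v ∈ (leaves H.coe).toFinset.map (.subtype _), G.degree v
        = ∑ u ∈ (leaves H.coe).toFinset, valency (G.induce H.verts) u := by
          rw [Finset.sum_map]
          refine Finset.sum_congr rfl fun u hu => ?_
          rw [valency_induce_of_mem_leaves hc hcard (Set.mem_toFinset.1 hu), valency_eq_degree]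
          rfl
      _ < Nat.card H.verts := hc.sum_valency_lt hL
      _ = maxKEndedOrder G (k + 1) := hcard

end Largest

end KEnded

theorem corollary4_general [Fintype V] (G : SimpleGraph V) [DecidableRel G.Adj]
    (k : ℕ) (hk : 1 ≤ k)
    (h : (maxKEndedOrder G (k + 1) : ℕ∞) ≤ minDegreeSum G (k + 1)) :
    maxKEndedOrder G k + k ≥ maxKEndedOrder G (k + 1) + 1 := by
  by_contra! hlt
  obtain ⟨s, hcard, hind, hsum⟩ := KEnded.exists_isIndSet_sum_degree_lt hk (Nat.le_of_lt_succ hlt)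
  have hle : (maxKEndedOrder G (k + 1) : ℕ∞) ≤ ((∑ v ∈ s, G.degree v : ℕ) : ℕ∞) := by
    rw [Nat.cast_sum]
    exact h.trans (iInf₂_le s ⟨hcard, hind⟩)
  exact hsum.not_ge (Nat.cast_le.1 hle)

/-- **Corollary 4.** If `G` is connected and `σ_{k+1} ≥ t_{k+1}` for some
positive integer `k`, then `t_k ≥ t_{k+1} - k + 1`. -/
theorem corollary4 [Fintype V] (G : SimpleGraph V) [DecidableRel G.Adj]
    (hG : G.Connected) (k : ℕ) (hk : 1 ≤ k)
    (h : (maxKEndedOrder G (k + 1) : ℕ∞) ≤ minDegreeSum G (k + 1)) :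
    maxKEndedOrder G k + k ≥ maxKEndedOrder G (k + 1) + 1 :=
  corollary4_general G k hk h
end
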